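/- arXiv:2307.02941 — 3 statements merged into one kernel-verified Lean document; each statement's English description precedes it below -/
import Mathlib

section
/- Suppose G is connected and p > r + 2, and set C_p = 2(p + r − 2)/(p − r − 2). Then every second-order critical point Y of the rank-p problem satisfies tr(Z Zᵀ (Y Yᵀ)ᵀ) ≥ (1 − C_p² ‖Δ‖²/λ₂²) · n² r. -/
open Matrix MeasureTheory ProbabilityTheory
open scoped Kronecker BigOperators

namespace SyncPaper

variable {α : Type*}

/-- The `i`-th `r × p` row-block of a block matrix `Y ∈ α^{rn × p}`. -/
def blk {n r p : ℕ} (Y : Matrix (Fin n × Fin r) (Fin p) α) (i : Fin n) :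
    Matrix (Fin r) (Fin p) α :=
  Matrix.of fun a b => Y (i, a) b

/-- `Y` is feasible: every `r × p` row-block has orthonormal rows. -/
def Feasible {n r p : ℕ} (Y : Matrix (Fin n × Fin r) (Fin p) ℝ) : Prop :=
  ∀ i, blk Y i * (blk Y i)ᵀ = 1

/-- Symmetric block-diagonal projection: keeps the symmetric part of each `r × r`
diagonal block and zeroes out all off-diagonal blocks. -/
noncomputable def SBD {n r : ℕ} (M : Matrix (Fin n × Fin r) (Fin n × Fin r) ℝ) :
    Matrix (Fin n × Fin r) (Fin n × Fin r) ℝ :=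
  Matrix.of fun q q' => if q.1 = q'.1 then (M q q' + M q' q) / 2 else 0

/-- The matrix `S(Y) = L̂ − SBD(L̂ Y Yᵀ)`. -/
noncomputable def Smat {n r p : ℕ} (Lhat : Matrix (Fin n × Fin r) (Fin n × Fin r) ℝ)
    (Y : Matrix (Fin n × Fin r) (Fin p) ℝ) :
    Matrix (Fin n × Fin r) (Fin n × Fin r) ℝ :=
  Lhat - SBD (Lhat * Y * Yᵀ)

/-- Second-order critical point of the rank-`p` problem `min ⟨L̂, Y Yᵀ⟩` over feasible `Y`. -/
def IsSecondOrderCritical {n r p : ℕ} (Lhat : Matrix (Fin n × Fin r) (Fin n × Fin r) ℝ)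
    (Y : Matrix (Fin n × Fin r) (Fin p) ℝ) : Prop :=
  Feasible Y ∧ Smat Lhat Y * Y = 0 ∧
    ∀ Ydot : Matrix (Fin n × Fin r) (Fin p) ℝ,
      (∀ i, blk Ydot i * (blk Y i)ᵀ + blk Y i * (blk Ydot i)ᵀ = 0) →
      0 ≤ (Smat Lhat Y * Ydot * Ydotᵀ).trace

/-- The stacked ground truth `Z ∈ ℝ^{rn × r}`. -/
def Zstack {n r : ℕ} (Zb : Fin n → Matrix (Fin r) (Fin r) ℝ) :
    Matrix (Fin n × Fin r) (Fin r) ℝ :=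
  Matrix.of fun q b => Zb q.1 q.2 b

/-- The block-diagonal matrix `D` with diagonal blocks `Z_1, …, Z_n`. -/
def Dmat {n r : ℕ} (Zb : Fin n → Matrix (Fin r) (Fin r) ℝ) :
    Matrix (Fin n × Fin r) (Fin n × Fin r) ℝ :=
  Matrix.of fun q q' => if q.1 = q'.1 then Zb q.1 q.2 q'.2 else 0

/-- `L_Z = D (L ⊗ I_r) Dᵀ`. -/
def LZmat {n r : ℕ} (L : Matrix (Fin n) (Fin n) ℝ) (Zb : Fin n → Matrix (Fin r) (Fin r) ℝ) :
    Matrix (Fin n × Fin r) (Fin n × Fin r) ℝ :=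
  Dmat Zb * (L ⊗ₖ (1 : Matrix (Fin r) (Fin r) ℝ)) * (Dmat Zb)ᵀ

/-- The ℓ₂→ℓ₂ operator norm of a matrix. -/
noncomputable def opNorm {m m' : Type*} [Fintype m] [Fintype m'] [DecidableEq m']
    (M : Matrix m m' ℝ) : ℝ :=
  ‖(Matrix.toEuclideanLin (𝕜 := ℝ) (m := m) (n := m')).trans
      LinearMap.toContinuousLinearMap M‖

/-- The second-smallest eigenvalue of a connected graph Laplacian, via the variational
(Courant–Fischer) characterization: the minimum of the quadratic form over unit vectors
orthogonal to the all-ones vector. -/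
noncomputable def lam2 {n : ℕ} (L : Matrix (Fin n) (Fin n) ℝ) : ℝ :=
  sInf {t : ℝ | ∃ x : Fin n → ℝ, (∑ i, x i = 0) ∧ (∑ i, (x i) ^ 2 = 1) ∧ t = x ⬝ᵥ (L *ᵥ x)}

/-- Squared Frobenius norm of a real matrix. -/
def frobSq {m m' : Type*} [Fintype m] [Fintype m'] (M : Matrix m m' ℝ) : ℝ :=
  ∑ i, ∑ j, (M i j) ^ 2

/-- The inner product `⟨A, B⟩ = tr(A Bᵀ)`. -/
def ip {m : Type*} [Fintype m] (A B : Matrix m m ℝ) : ℝ := (A * Bᵀ).trace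

/-- Feasibility for the SDP relaxation. -/
def SDPFeasible {n r : ℕ} (X : Matrix (Fin n × Fin r) (Fin n × Fin r) ℝ) : Prop :=
  X.PosSemidef ∧ SBD X = 1

end SyncPaper

namespace SyncPaper

/-- bilinear bound -/
def Bd {m : Type*} [Fintype m] (N : Matrix m m ℝ) (ν : ℝ) : Prop :=
  ∀ (x y : m → ℝ) (t : ℝ), 0 < t → x ⬝ᵥ (N *ᵥ y) ≤ ν / 2 * (t * (x ⬝ᵥ x) + (y ⬝ᵥ y) / t)

theorem Bd.neg {m : Type*} [Fintype m] {N : Matrix m m ℝ} {ν : ℝ} (h : Bd N ν) : Bd (-N) ν := by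
  intro x y t ht
  have := h (-x) y t ht
  simpa [Matrix.neg_mulVec] using this

theorem trace_eq_frob {m k : Type*} [Fintype m] [Fintype k] (F : Matrix m k ℝ) :
    (Fᵀ * F).trace = frobSq F := by
  simp only [Matrix.trace, Matrix.diag, Matrix.mul_apply, frobSq, Matrix.transpose_apply]
  rw [Finset.sum_comm]
  simp [pow_two]

theorem Bd.mat {m k : Type*} [Fintype m] [Fintype k] {N : Matrix m m ℝ} {ν : ℝ} (h : Bd N ν)
    (F G : Matrix m k ℝ) (t : ℝ) (ht : 0 < t) :
    (Fᵀ * N * G).trace ≤ ν / 2 * (t * frobSq F + frobSq G / t) := by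
  have h1 : (Fᵀ * N * G).trace = ∑ b, (fun i => F i b) ⬝ᵥ (N *ᵥ (fun i => G i b)) := by
    simp only [Matrix.trace, Matrix.diag, Matrix.mul_assoc]
    refine Finset.sum_congr rfl fun b _ => ?_
    simp only [Matrix.mul_apply, dotProduct, Matrix.mulVec, Matrix.transpose_apply]
  rw [h1, ← trace_eq_frob, ← trace_eq_frob]
  have h2 : ∀ H : Matrix m k ℝ, (Hᵀ * H).trace = ∑ b, (fun i => H i b) ⬝ᵥ (fun i => H i b) := by
    intro H
    simp only [Matrix.trace, Matrix.diag, Matrix.mul_apply, dotProduct, Matrix.transpose_apply]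
  rw [h2, h2, Finset.mul_sum, Finset.sum_div, ← Finset.sum_add_distrib, Finset.mul_sum]
  exact Finset.sum_le_sum fun b _ => h _ _ t ht

theorem key {m k l : Type*} [Fintype m] [Fintype k] [Fintype l] [DecidableEq k]
    {N : Matrix m m ℝ} {ν : ℝ} (h : Bd N ν) (hν : 0 ≤ ν)
    (Q : Matrix m k ℝ) (Y : Matrix m l ℝ) (μ e : ℝ) (hμ : 0 < μ)
    (hQ : Qᵀ * Q = μ • (1 : Matrix k k ℝ)) (hQe : frobSq Q = e) (hYe : frobSq Y = e)
    (hY : ∀ x : l → ℝ, (Y *ᵥ x) ⬝ᵥ (Y *ᵥ x) ≤ μ * (x ⬝ᵥ x)) (t : ℝ) (ht : 0 < t) :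
    (N * (Y * Yᵀ - Q * Qᵀ)).trace ≤ ν * (t * (e - frobSq (Qᵀ * Y) / μ) + e / t) := by
  set B : Matrix k l ℝ := μ⁻¹ • (Qᵀ * Y) with hB
  have hQY : Qᵀ * Y = μ • B := by rw [hB, smul_smul, mul_inv_cancel₀ hμ.ne', one_smul]
  have hYQ : Yᵀ * Q = μ • Bᵀ := by
    have := congrArg Matrix.transpose hQY
    simpa using this
  have hBB : (Bᵀ * B).trace = frobSq B := trace_eq_frob B
  have hBB' : (B * Bᵀ).trace = frobSq B := by rw [Matrix.trace_mul_comm, hBB]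
  have hf : frobSq (Qᵀ * Y) / μ = μ * frobSq B := by
    rw [hQY, ← trace_eq_frob, ← trace_eq_frob]
    simp only [Matrix.transpose_smul, Matrix.smul_mul, Matrix.mul_smul, Matrix.trace_smul, smul_eq_mul]
    field_simp
  have e1 : frobSq (Y - Q * B) = e - μ * frobSq B := by
    rw [← trace_eq_frob]
    have : (Y - Q * B)ᵀ * (Y - Q * B) = Yᵀ * Y - μ • (Bᵀ * B) := by
      rw [Matrix.transpose_sub, Matrix.transpose_mul, Matrix.sub_mul, Matrix.mul_sub, Matrix.mul_sub,
        ← Matrix.mul_assoc Yᵀ, hYQ, Matrix.mul_assoc Bᵀ Qᵀ Y, hQY, Matrix.mul_assoc Bᵀ Qᵀ,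
        ← Matrix.mul_assoc Qᵀ Q B, hQ]
      simp
    rw [this, Matrix.trace_sub, Matrix.trace_smul, trace_eq_frob, hBB, hYe, smul_eq_mul]
  have e0 : frobSq (Y * Bᵀ) ≤ μ * frobSq B := by
    have : ∀ a, ((fun i => (Y * Bᵀ) i a) ⬝ᵥ (fun i => (Y * Bᵀ) i a)) ≤ μ * ((fun b => B a b) ⬝ᵥ (fun b => B a b)) := by
      intro a
      exact hY (fun b => B a b)
    unfold frobSq
    rw [Finset.sum_comm, Finset.mul_sum]
    refine Finset.sum_le_sum fun a _ => ?_
    simpa [dotProduct, pow_two] using this a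
  have e2 : frobSq (Y * Bᵀ - Q) ≤ e - μ * frobSq B := by
    rw [← trace_eq_frob]
    have : (Y * Bᵀ - Q)ᵀ * (Y * Bᵀ - Q)
        = (Y * Bᵀ)ᵀ * (Y * Bᵀ) - μ • (B * Bᵀ) - μ • (B * Bᵀ) + Qᵀ * Q := by
      rw [Matrix.transpose_sub, Matrix.sub_mul, Matrix.mul_sub, Matrix.mul_sub,
        ← Matrix.mul_assoc Qᵀ, hQY, Matrix.transpose_mul Y, Matrix.mul_assoc _ Yᵀ Q, hYQ]
      simp
      abel
    rw [this, Matrix.trace_add, Matrix.trace_sub, Matrix.trace_sub, Matrix.trace_smul, hBB',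
      trace_eq_frob, trace_eq_frob, hQe, smul_eq_mul]
    linarith
  have hid : (N * (Y * Yᵀ - Q * Qᵀ)).trace
      = ((Y * Bᵀ - Q)ᵀ * N * Q).trace + (Yᵀ * N * (Y - Q * B)).trace := by
    have a1 : ((Y * Bᵀ - Q)ᵀ * N * Q).trace = (N * (Q * (Y * Bᵀ - Q)ᵀ)).trace := by
      rw [Matrix.mul_assoc, Matrix.trace_mul_comm, Matrix.mul_assoc]
    have a2 : (Yᵀ * N * (Y - Q * B)).trace = (N * ((Y - Q * B) * Yᵀ)).trace := by
      rw [Matrix.mul_assoc, Matrix.trace_mul_comm, Matrix.mul_assoc]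
    rw [a1, a2, ← Matrix.trace_add, ← Matrix.mul_add]
    congr 2
    simp only [Matrix.transpose_sub, Matrix.transpose_mul, Matrix.transpose_transpose,
      Matrix.mul_sub, Matrix.sub_mul, Matrix.mul_assoc]
    abel
  have b1 := h.mat (Y * Bᵀ - Q) Q t ht
  have b2 := h.mat Y (Y - Q * B) t⁻¹ (inv_pos.2 ht)
  rw [hid, hf]
  rw [hQe] at b1
  rw [hYe, e1] at b2
  have b3 : ν / 2 * (t * frobSq (Y * Bᵀ - Q) + e / t) ≤ ν / 2 * (t * (e - μ * frobSq B) + e / t) := by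
    gcongr
  have b4 : ν / 2 * (t⁻¹ * e + (e - μ * frobSq B) / t⁻¹) = ν / 2 * (t * (e - μ * frobSq B) + e / t) := by
    field_simp
    ring
  linarith

theorem Bd_opNorm {m : Type*} [Fintype m] [DecidableEq m] (N : Matrix m m ℝ) : Bd N (opNorm N) := by
  intro x y t ht
  have h1 : x ⬝ᵥ (N *ᵥ y) ≤ ‖WithLp.toLp 2 x‖ * (opNorm N * ‖WithLp.toLp 2 y‖) := by
    have h2 : ‖(WithLp.toLp 2 (N *ᵥ y) : EuclideanSpace ℝ m)‖ ≤ opNorm N * ‖WithLp.toLp 2 y‖ := by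
      have := ((Matrix.toEuclideanLin (𝕜 := ℝ) (m := m) (n := m)).trans
        LinearMap.toContinuousLinearMap N).le_opNorm (WithLp.toLp 2 y)
      simpa [opNorm, Matrix.toEuclideanLin] using this
    have h3 := real_inner_le_norm (WithLp.toLp 2 x : EuclideanSpace ℝ m) (WithLp.toLp 2 (N *ᵥ y))
    have h4 : inner ℝ (WithLp.toLp 2 x : EuclideanSpace ℝ m) (WithLp.toLp 2 (N *ᵥ y)) = x ⬝ᵥ (N *ᵥ y) := by
      simp [EuclideanSpace.inner_eq_star_dotProduct, dotProduct_comm]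
    rw [h4] at h3
    exact h3.trans (mul_le_mul_of_nonneg_left h2 (norm_nonneg _))
  have h5 : ∀ z : m → ℝ, z ⬝ᵥ z = ‖(WithLp.toLp 2 z : EuclideanSpace ℝ m)‖ ^ 2 := by
    intro z
    rw [EuclideanSpace.norm_sq_eq]
    simp [dotProduct, pow_two]
  rw [h5 x, h5 y]
  have hν : 0 ≤ opNorm N := norm_nonneg _
  refine h1.trans ?_
  generalize ‖(WithLp.toLp 2 x : EuclideanSpace ℝ m)‖ = a
  generalize ‖(WithLp.toLp 2 y : EuclideanSpace ℝ m)‖ = b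
  have h6 : 2 * (a * b) ≤ t * a ^ 2 + b ^ 2 / t := by
    have : t * a ^ 2 + b ^ 2 / t - 2 * (a * b) = (t * a - b) ^ 2 / t := by
      field_simp
      ring
    have h7 : 0 ≤ (t * a - b) ^ 2 / t := by positivity
    linarith
  nlinarith

/-- Poincare and positivity of `lam2`. -/
theorem lam2_le {n : ℕ} (G : SimpleGraph (Fin n)) [DecidableRel G.Adj] (x : Fin n → ℝ)
    (hx : ∑ i, x i = 0) :
    lam2 (G.lapMatrix ℝ) * ∑ i, (x i) ^ 2 ≤ x ⬝ᵥ (G.lapMatrix ℝ *ᵥ x) := by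
  have hpsd : ∀ y : Fin n → ℝ, 0 ≤ y ⬝ᵥ (G.lapMatrix ℝ *ᵥ y) := by
    intro y
    have := (SimpleGraph.posSemidef_lapMatrix ℝ G).dotProduct_mulVec_nonneg y
    simpa using this
  rcases eq_or_lt_of_le (Finset.sum_nonneg fun i (_ : i ∈ Finset.univ) => sq_nonneg (x i)) with h | h
  · rw [← h, mul_zero]; exact hpsd x
  · set S := ∑ i, (x i) ^ 2 with hS
    have hs : 0 < √S := Real.sqrt_pos.2 h
    have hss : √S ^ 2 = S := Real.sq_sqrt h.le
    have : lam2 (G.lapMatrix ℝ) ≤ ((√S)⁻¹ • x) ⬝ᵥ (G.lapMatrix ℝ *ᵥ ((√S)⁻¹ • x)) := by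
      apply csInf_le
      · refine ⟨0, ?_⟩
        rintro _ ⟨y, _, _, rfl⟩
        exact hpsd y
      · refine ⟨_, ?_, ?_, rfl⟩
        · simp [← Finset.mul_sum, hx]
        · simp only [Pi.smul_apply, smul_eq_mul, mul_pow, ← Finset.mul_sum, inv_pow, hss]
          rw [← hS]
          exact inv_mul_cancel₀ h.ne'
    rw [Matrix.mulVec_smul, smul_dotProduct, dotProduct_smul, smul_smul, ← pow_two, inv_pow, hss,
      smul_eq_mul] at this
    calc _ ≤ S⁻¹ * (x ⬝ᵥ (G.lapMatrix ℝ *ᵥ x)) * S := by gcongr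
      _ = _ := by field_simp

theorem lam2_pos {n : ℕ} (hn : 2 ≤ n) (G : SimpleGraph (Fin n)) [DecidableRel G.Adj]
    (hG : G.Connected) : 0 < lam2 (G.lapMatrix ℝ) := by
  set K : Set (EuclideanSpace ℝ (Fin n)) := {x | ∑ i, x i = 0} ∩ Metric.sphere 0 1 with hK
  have hKc : IsCompact K := by
    refine (isCompact_sphere _ _).inter_left ?_
    exact isClosed_eq (by fun_prop) continuous_const
  have hmem : ∀ x : EuclideanSpace ℝ (Fin n), x ∈ K ↔ ∑ i, x i = 0 ∧ ∑ i, (x i) ^ 2 = 1 := by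
    intro x
    simp only [hK, Set.mem_inter_iff, Set.mem_ofPred_eq, mem_sphere_zero_iff_norm]
    rw [← EuclideanSpace.real_norm_sq_eq]
    have := norm_nonneg x
    constructor
    · rintro ⟨h1, h2⟩; exact ⟨h1, by rw [h2]; norm_num⟩
    · rintro ⟨h1, h2⟩; exact ⟨h1, by nlinarith⟩
  have hKne : K.Nonempty := by
    let a : Fin n := ⟨0, by omega⟩
    let b : Fin n := ⟨1, by omega⟩
    have hab : a ≠ b := by simp [a, b]
    refine ⟨WithLp.toLp 2 ((√2)⁻¹ • (Pi.single a 1 - Pi.single b 1)), (hmem _).2 ⟨?_, ?_⟩⟩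
    · simp [← Finset.mul_sum]
    · have h2 : ∀ i, ((Pi.single a 1 - Pi.single b 1 : Fin n → ℝ) i) ^ 2
          = (Pi.single a 1 : Fin n → ℝ) i + (Pi.single b 1 : Fin n → ℝ) i := by
        intro i
        by_cases h : i = a
        · subst h; simp [hab]
        · by_cases h' : i = b
          · subst h'; simp [h]
          · simp [h, h']
      simp only [Pi.smul_apply, smul_eq_mul, mul_pow, h2, ← Finset.mul_sum, Finset.sum_add_distrib]
      simp
      norm_num
  obtain ⟨x, hxK, hx⟩ := hKc.exists_isMinOn hKne
    (f := fun x => (x : Fin n → ℝ) ⬝ᵥ (G.lapMatrix ℝ *ᵥ (x : Fin n → ℝ)))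
    (by
      apply Continuous.continuousOn
      simp only [dotProduct, Matrix.mulVec]
      fun_prop)
  have hx0 : 0 < (x : Fin n → ℝ) ⬝ᵥ (G.lapMatrix ℝ *ᵥ (x : Fin n → ℝ)) := by
    have hge : 0 ≤ (x : Fin n → ℝ) ⬝ᵥ (G.lapMatrix ℝ *ᵥ (x : Fin n → ℝ)) := by
      have := (SimpleGraph.posSemidef_lapMatrix ℝ G).dotProduct_mulVec_nonneg (x : Fin n → ℝ)
      simpa using this
    refine lt_of_le_of_ne hge fun h => ?_
    have h1 : Matrix.toLinearMap₂' ℝ (G.lapMatrix ℝ) (x : Fin n → ℝ) (x : Fin n → ℝ) = 0 := by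
      rw [Matrix.toLinearMap₂'_apply']; exact h.symm
    rw [SimpleGraph.lapMatrix_toLinearMap₂'_apply'_eq_zero_iff_forall_reachable] at h1
    obtain ⟨h2, h3⟩ := (hmem x).1 hxK
    let a : Fin n := ⟨0, by omega⟩
    have h4 : ∀ i, x i = x a := fun i => h1 i a (hG.preconnected i a)
    simp only [h4] at h2 h3
    simp at h2 h3
    rcases h2 with h2 | h2
    · omega
    · rw [h2] at h3; simp at h3
  refine lt_of_lt_of_le hx0 (le_csInf ?_ ?_)
  · obtain ⟨y, hy⟩ := hKne
    exact ⟨_, y, ((hmem y).1 hy).1, ((hmem y).1 hy).2, rfl⟩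
  · rintro _ ⟨y, h1, h2, rfl⟩
    exact hx ((hmem (WithLp.toLp 2 y)).2 ⟨h1, h2⟩)

end SyncPaper

namespace SyncPaper

theorem trace_mulT {m k : Type*} [Fintype m] [Fintype k] (A B : Matrix m k ℝ) :
    (A * Bᵀ).trace = ∑ q, ∑ q', A q q' * B q q' := by
  simp [Matrix.trace, Matrix.diag, Matrix.mul_apply]

/-- rotated blocks, vectorised -/
def Uv {n r p : ℕ} (Zb : Fin n → Matrix (Fin r) (Fin r) ℝ)
    (Y : Matrix (Fin n × Fin r) (Fin p) ℝ) : Matrix (Fin n) (Fin r × Fin p) ℝ :=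
  Matrix.of fun i k => ((Zb i)ᵀ * blk Y i) k.1 k.2

section
variable {n r p : ℕ} (Zb : Fin n → Matrix (Fin r) (Fin r) ℝ)
  (Y : Matrix (Fin n × Fin r) (Fin p) ℝ)

theorem T_eq (i j : Fin n) : (Uv Zb Y * (Uv Zb Y)ᵀ) i j
    = (((Zb i)ᵀ * blk Y i) * ((Zb j)ᵀ * blk Y j)ᵀ).trace := by
  rw [trace_mulT]
  simp [Matrix.mul_apply, Uv, Fintype.sum_prod_type]

theorem T_diag (hZb : ∀ i, Zb i * (Zb i)ᵀ = 1) (hY : Feasible Y) (i : Fin n) :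
    (Uv Zb Y * (Uv Zb Y)ᵀ) i i = r := by
  rw [T_eq, Matrix.transpose_mul, Matrix.transpose_transpose, Matrix.mul_assoc,
    ← Matrix.mul_assoc (blk Y i), hY i, Matrix.one_mul, mul_eq_one_comm.1 (hZb i)]
  simp

theorem sum_U_Y (hY : Feasible Y) (j : Fin n) (a c : Fin r) :
    ∑ b, Uv Zb Y j (a, b) * Y (j, c) b = Zb j c a := by
  have : ((Zb j)ᵀ * blk Y j) * (blk Y j)ᵀ = (Zb j)ᵀ := by
    rw [Matrix.mul_assoc, hY j, Matrix.mul_one]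
  have := congrFun (congrFun this a) c
  simpa [Matrix.mul_apply, Uv, blk] using this

theorem X_diag (hY : Feasible Y) (i : Fin n) (c c' : Fin r) :
    (Y * Yᵀ) (i, c) (i, c') = if c = c' then 1 else 0 := by
  have := congrFun (congrFun (hY i) c) c'
  simpa [Matrix.mul_apply, blk, Matrix.one_apply] using this

theorem ZZ_diag (hZb : ∀ i, Zb i * (Zb i)ᵀ = 1) (i : Fin n) (c c' : Fin r) :
    (Zstack Zb * (Zstack Zb)ᵀ) (i, c) (i, c') = if c = c' then 1 else 0 := by
  have := congrFun (congrFun (hZb i) c) c'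
  simpa [Matrix.mul_apply, Zstack, Matrix.one_apply] using this

theorem sum_ZZ_X (i j : Fin n) :
    ∑ c, ∑ c', (Zstack Zb * (Zstack Zb)ᵀ) (i, c) (j, c') * (Y * Yᵀ) (i, c) (j, c')
      = (Uv Zb Y * (Uv Zb Y)ᵀ) i j := by
  have h : ∀ c c', (Zstack Zb * (Zstack Zb)ᵀ) (i, c) (j, c') * (Y * Yᵀ) (i, c) (j, c')
      = (Zb i * (Zb j)ᵀ) c c' * (blk Y i * (blk Y j)ᵀ) c c' := by
    intro c c'
    simp [Matrix.mul_apply, Zstack, blk]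
  simp only [h]
  rw [← trace_mulT, T_eq]
  simp only [Matrix.transpose_mul, Matrix.transpose_transpose]
  have h1 : (Zb i * (Zb j)ᵀ * (blk Y j * (blk Y i)ᵀ)).trace
      = ((blk Y i * (blk Y j)ᵀ * Zb j) * (Zb i)ᵀ).trace := by
    rw [← Matrix.trace_transpose]
    simp only [Matrix.transpose_mul, Matrix.transpose_transpose, Matrix.mul_assoc]
  rw [h1, Matrix.trace_mul_comm]
  simp only [Matrix.mul_assoc]

theorem sum_ZZ_ZZ (hZb : ∀ i, Zb i * (Zb i)ᵀ = 1) (i j : Fin n) :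
    ∑ c, ∑ c', (Zstack Zb * (Zstack Zb)ᵀ) (i, c) (j, c') * (Zstack Zb * (Zstack Zb)ᵀ) (i, c) (j, c')
      = r := by
  have h : ∀ c c', (Zstack Zb * (Zstack Zb)ᵀ) (i, c) (j, c')
      = (Zb i * (Zb j)ᵀ) c c' := by
    intro c c'
    simp [Matrix.mul_apply, Zstack]
  simp only [h]
  rw [← trace_mulT, Matrix.transpose_mul, Matrix.transpose_transpose, Matrix.mul_assoc,
    ← Matrix.mul_assoc (Zb j)ᵀ, mul_eq_one_comm.1 (hZb j), Matrix.one_mul, hZb i]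
  simp

theorem LZ_apply (L : Matrix (Fin n) (Fin n) ℝ) (i j : Fin n) (c c' : Fin r) :
    LZmat L Zb (i, c) (j, c') = L i j * (Zstack Zb * (Zstack Zb)ᵀ) (i, c) (j, c') := by
  simp only [LZmat, Matrix.mul_apply, Dmat, Zstack, Fintype.sum_prod_type, Matrix.kroneckerMap_apply,
    Matrix.of_apply, Matrix.transpose_apply, Matrix.one_apply]
  simp [Finset.mul_sum]
  refine Finset.sum_congr rfl fun a _ => ?_
  ring

/-- The averaged second-order direction matrix. -/
noncomputable def Emat : Matrix (Fin n × Fin r) (Fin n × Fin r) ℝ :=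
  Matrix.of fun q q' => ((p : ℝ) - 2) * (Zstack Zb * (Zstack Zb)ᵀ) q q'
    + (Uv Zb Y * (Uv Zb Y)ᵀ) q.1 q'.1 * (Y * Yᵀ) q q'

/-- direction -/
noncomputable def Dir (k : Fin r × Fin p) : Matrix (Fin n × Fin r) (Fin p) ℝ :=
  Matrix.of fun q d => (if k.2 = d then Zb q.1 q.2 k.1 else 0) - Y q k.2 * Uv Zb Y q.1 (k.1, d)

theorem Dir_blk (k : Fin r × Fin p) (i : Fin n) :
    blk (Dir Zb Y k) i = Zb i * Matrix.single k.1 k.2 (1:ℝ)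
      - blk Y i * (Zb i * Matrix.single k.1 k.2 (1:ℝ))ᵀ * blk Y i := by
  have h1 : ∀ c d, (Zb i * Matrix.single k.1 k.2 (1:ℝ)) c d = if k.2 = d then Zb i c k.1 else 0 := by
    intro c d
    simp [Matrix.mul_apply, Matrix.single_apply, ite_and]
  ext c d
  rw [Matrix.mul_assoc, Matrix.sub_apply, h1, Matrix.mul_apply]
  simp only [blk, Dir, Matrix.of_apply, Uv, Matrix.mul_apply, Matrix.transpose_apply, sub_right_inj]
  simp only [← Matrix.mul_apply, h1]
  rw [Finset.sum_eq_single k.2]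
  · simp
  · intro b _ hb
    simp [hb.symm]
  · simp

theorem Dir_tangent (hY : Feasible Y) (k : Fin r × Fin p) (i : Fin n) :
    blk (Dir Zb Y k) i * (blk Y i)ᵀ + blk Y i * (blk (Dir Zb Y k) i)ᵀ = 0 := by
  rw [Dir_blk]
  generalize Zb i * Matrix.single k.1 k.2 (1:ℝ) = W
  have h := hY i
  rw [Matrix.sub_mul, Matrix.mul_assoc, h, Matrix.transpose_sub, Matrix.mul_sub]
  simp only [Matrix.transpose_mul, Matrix.transpose_transpose]
  rw [← Matrix.mul_assoc (blk Y i), h]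
  simp

theorem Dir_sum (hY : Feasible Y) :
    ∑ k, Dir Zb Y k * (Dir Zb Y k)ᵀ = Emat Zb Y := by
  ext ⟨i, c⟩ ⟨j, c'⟩
  rw [Matrix.sum_apply]
  simp only [Matrix.mul_apply, Dir, Matrix.of_apply, Matrix.transpose_apply, Emat]
  have e1 : ∀ k : Fin r × Fin p, ∀ d,
      ((if k.2 = d then Zb i c k.1 else 0) - Y (i, c) k.2 * Uv Zb Y i (k.1, d)) *
      ((if k.2 = d then Zb j c' k.1 else 0) - Y (j, c') k.2 * Uv Zb Y j (k.1, d))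
      = (if k.2 = d then Zb i c k.1 * Zb j c' k.1 - Zb i c k.1 * (Uv Zb Y j (k.1, d) * Y (j, c') k.2)
          - Zb j c' k.1 * (Uv Zb Y i (k.1, d) * Y (i, c) k.2) else 0)
        + (Y (i, c) k.2 * Y (j, c') k.2) * (Uv Zb Y i (k.1, d) * Uv Zb Y j (k.1, d)) := by
    intro k d
    split_ifs <;> ring
  simp only [e1, Finset.sum_add_distrib, Finset.sum_ite_eq, Finset.mem_univ, if_true]
  congr 1
  · rw [Fintype.sum_prod_type]
    simp only [Finset.sum_sub_distrib, ← Finset.mul_sum, sum_U_Y Zb Y hY]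
    simp only [Zstack, Matrix.of_apply, Finset.sum_const, Finset.card_univ, Fintype.card_fin, nsmul_eq_mul]
    have hp : ∑ x, Zb i c x * ((p : ℝ) * Zb j c' x) = p * ∑ x, Zb i c x * Zb j c' x := by
      rw [Finset.mul_sum]
      exact Finset.sum_congr rfl fun _ _ => by ring
    rw [hp]
    have : ∑ x, Zb j c' x * Zb i c x = ∑ x, Zb i c x * Zb j c' x :=
      Finset.sum_congr rfl fun _ _ => mul_comm _ _
    rw [this]
    ring
  · simp only [Fintype.sum_prod_type, ← Finset.mul_sum]
    rw [Finset.sum_comm]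
    simp only [← Finset.mul_sum, ← Finset.sum_mul]
    ring

theorem second_order (hZb : ∀ i, Zb i * (Zb i)ᵀ = 1)
    (Lhat : Matrix (Fin n × Fin r) (Fin n × Fin r) ℝ) (hY : IsSecondOrderCritical Lhat Y) :
    0 ≤ ∑ q, ∑ q', Lhat q q' * (Emat Zb Y q q' - ((p : ℝ) + r - 2) * (Y * Yᵀ) q q') := by
  obtain ⟨hF, -, h2⟩ := hY
  have h0 : 0 ≤ (Smat Lhat Y * Emat Zb Y).trace := by
    rw [← Dir_sum Zb Y hF, Matrix.mul_sum, Matrix.trace_sum]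
    refine Finset.sum_nonneg fun k _ => ?_
    rw [← Matrix.mul_assoc]
    exact h2 _ (Dir_tangent Zb Y hF k)
  have hEs : (Emat Zb Y)ᵀ = Emat Zb Y := by
    rw [← Dir_sum Zb Y hF, Matrix.transpose_sum]
    simp
  have hXs : (Y * Yᵀ)ᵀ = Y * Yᵀ := by simp
  have hE : ∀ q q' : Fin n × Fin r, q.1 = q'.1 → Emat Zb Y q q' = if q = q' then (p : ℝ) + r - 2 else 0 := by
    rintro ⟨i, c⟩ ⟨j, c'⟩ h
    obtain rfl : i = j := h
    simp only [Emat, Matrix.of_apply, X_diag Y hF, ZZ_diag Zb hZb, T_diag Zb Y hZb hF, Prod.mk.injEq, true_and]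
    split_ifs <;> ring
  have h3 : (SBD (Lhat * Y * Yᵀ) * (Emat Zb Y)ᵀ).trace
      = ((p : ℝ) + r - 2) * (Lhat * (Y * Yᵀ)ᵀ).trace := by
    rw [hXs, ← Matrix.mul_assoc, trace_mulT, Matrix.trace, Finset.mul_sum]
    refine Finset.sum_congr rfl fun q _ => ?_
    rw [Finset.sum_eq_single q]
    · rw [hE q q rfl]
      simp [SBD]
      ring
    · intro q' _ hq
      by_cases h : q.1 = q'.1
      · rw [hE q q' h, if_neg hq.symm, mul_zero]
      · simp [SBD, h]
    · simp
  rw [← hEs, Smat, Matrix.sub_mul, Matrix.trace_sub, h3, trace_mulT, trace_mulT] at h0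
  simp only [mul_sub, Finset.sum_sub_distrib]
  simp only [Finset.mul_sum] at h0
  refine h0.trans (le_of_eq ?_)
  congr 1
  refine Finset.sum_congr rfl fun q _ => Finset.sum_congr rfl fun q' _ => ?_
  ring

theorem T_le (hZb : ∀ i, Zb i * (Zb i)ᵀ = 1) (hY : Feasible Y) (i j : Fin n) :
    (Uv Zb Y * (Uv Zb Y)ᵀ) i j ≤ r := by
  have h1 := T_diag Zb Y hZb hY i
  have h2 := T_diag Zb Y hZb hY j
  simp only [Matrix.mul_apply, Matrix.transpose_apply] at *
  have : ∑ k, Uv Zb Y i k * Uv Zb Y j k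
      ≤ ∑ k, (Uv Zb Y i k * Uv Zb Y i k + Uv Zb Y j k * Uv Zb Y j k) / 2 := by
    refine Finset.sum_le_sum fun k _ => ?_
    nlinarith [sq_nonneg (Uv Zb Y i k - Uv Zb Y j k)]
  rw [← Finset.sum_div, Finset.sum_add_distrib, h1, h2] at this
  linarith

theorem lap_bound (hZb : ∀ i, Zb i * (Zb i)ᵀ = 1) (hY : Feasible Y)
    (G : SimpleGraph (Fin n)) [DecidableRel G.Adj] :
    ∑ q, ∑ q', LZmat (G.lapMatrix ℝ) Zb q q' * (Emat Zb Y q q' - ((p : ℝ) + r - 2) * (Y * Yᵀ) q q')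
      ≤ -((p : ℝ) - r - 2) * ∑ i, ∑ j, G.lapMatrix ℝ i j * (Uv Zb Y * (Uv Zb Y)ᵀ) i j := by
  set T := Uv Zb Y * (Uv Zb Y)ᵀ with hT
  set L := G.lapMatrix ℝ with hL
  set c : ℝ := (p : ℝ) + r - 2 with hc
  have hL0 : ∀ i, ∑ j, L i j = 0 := by
    intro i
    have := congrFun (SimpleGraph.lapMatrix_mulVec_const_eq_zero (R := ℝ) G) i
    simpa [Matrix.mulVec, dotProduct] using this
  have h1 : ∑ q, ∑ q', LZmat L Zb q q' * (Emat Zb Y q q' - c * (Y * Yᵀ) q q')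
      = ∑ i, ∑ j, L i j * ((r - T i j) * (p - 2 - T i j)) := by
    simp only [Fintype.sum_prod_type, LZ_apply]
    refine Finset.sum_congr rfl fun i _ => ?_
    rw [Finset.sum_comm]
    refine Finset.sum_congr rfl fun j _ => ?_
    have e : ∀ x y, L i j * (Zstack Zb * (Zstack Zb)ᵀ) (i, x) (j, y) *
        (Emat Zb Y (i, x) (j, y) - c * (Y * Yᵀ) (i, x) (j, y))
        = L i j * ((p - 2) * ((Zstack Zb * (Zstack Zb)ᵀ) (i, x) (j, y) * (Zstack Zb * (Zstack Zb)ᵀ) (i, x) (j, y))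
          + (T i j - c) * ((Zstack Zb * (Zstack Zb)ᵀ) (i, x) (j, y) * (Y * Yᵀ) (i, x) (j, y))) := by
      intro x y
      simp only [Emat, Matrix.of_apply, ← hT]
      ring
    simp only [e, ← Finset.mul_sum, Finset.sum_add_distrib, sum_ZZ_X, sum_ZZ_ZZ Zb hZb, ← hT]
    rw [hc]
    ring
  rw [h1]
  have h2 : ∀ i j, L i j * ((r - T i j) * (p - 2 - T i j)) ≤ L i j * ((r - T i j) * (p - r - 2)) := by
    intro i j
    by_cases h : i = j
    · subst h
      rw [hT, T_diag Zb Y hZb hY]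
      simp
    · have hLij : L i j ≤ 0 := by
        simp only [hL, SimpleGraph.lapMatrix, SimpleGraph.degMatrix, Matrix.sub_apply, Matrix.diagonal_apply_ne _ h,
          SimpleGraph.adjMatrix_apply]
        split_ifs <;> norm_num
      have ht : T i j ≤ r := T_le Zb Y hZb hY i j
      apply mul_le_mul_of_nonpos_left _ hLij
      apply mul_le_mul_of_nonneg_left _ (by linarith)
      linarith
  refine (Finset.sum_le_sum fun i _ => Finset.sum_le_sum fun j _ => h2 i j).trans (le_of_eq ?_)
  have h3 : ∀ i, ∑ j, L i j * ((r - T i j) * (p - r - 2)) = -((p:ℝ) - r - 2) * ∑ j, L i j * T i j := by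
    intro i
    have : ∀ j, L i j * ((r - T i j) * (p - r - 2)) = (r * (p - r - 2)) * L i j + -((p:ℝ) - r - 2) * (L i j * T i j) := by
      intro j; ring
    simp only [this, Finset.sum_add_distrib, ← Finset.mul_sum, hL0]
    simp
  simp only [h3, ← Finset.mul_sum]

theorem frob_ZY : frobSq ((Zstack Zb)ᵀ * Y) = ∑ k, (∑ i, Uv Zb Y i k) ^ 2 := by
  simp only [frobSq, Fintype.sum_prod_type, Matrix.mul_apply, Zstack, Uv, blk, Matrix.of_apply,
    Matrix.transpose_apply]

theorem frob_U (hZb : ∀ i, Zb i * (Zb i)ᵀ = 1) (hY : Feasible Y) : frobSq (Uv Zb Y) = n * r := by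
  have := fun i => T_diag Zb Y hZb hY i
  simp only [Matrix.mul_apply, Matrix.transpose_apply, ← pow_two] at this
  simp [frobSq, this]

theorem poincare (hn : 1 ≤ n) (hZb : ∀ i, Zb i * (Zb i)ᵀ = 1) (hY : Feasible Y)
    (G : SimpleGraph (Fin n)) [DecidableRel G.Adj] :
    lam2 (G.lapMatrix ℝ) * (n * r - frobSq ((Zstack Zb)ᵀ * Y) / n)
      ≤ ∑ i, ∑ j, G.lapMatrix ℝ i j * (Uv Zb Y * (Uv Zb Y)ᵀ) i j := by
  have hn' : (0 : ℝ) < n := by exact_mod_cast hn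
  set L := G.lapMatrix ℝ with hL
  have hLc : ∀ m : ℝ, L *ᵥ (fun _ => m) = 0 := by
    intro m
    have := SimpleGraph.lapMatrix_mulVec_const_eq_zero (R := ℝ) G
    have h2 : (fun _ : Fin n => m) = m • (fun _ => (1 : ℝ)) := by ext; simp
    rw [h2, Matrix.mulVec_smul, hL, this, smul_zero]
  have hLs : Lᵀ = L := (G.isSymm_lapMatrix (R := ℝ))
  have h1 : ∑ i, ∑ j, L i j * (Uv Zb Y * (Uv Zb Y)ᵀ) i j
      = ∑ k, (fun i => Uv Zb Y i k) ⬝ᵥ (L *ᵥ (fun i => Uv Zb Y i k)) := by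
    simp only [Matrix.mul_apply, dotProduct, Matrix.mulVec, Finset.mul_sum, Matrix.transpose_apply]
    conv_rhs => rw [Finset.sum_comm]
    refine Finset.sum_congr rfl fun i _ => ?_
    rw [Finset.sum_comm]
    refine Finset.sum_congr rfl fun k _ => Finset.sum_congr rfl fun j _ => ?_
    ring
  have h2 : ∀ u : Fin n → ℝ, lam2 L * (∑ i, u i ^ 2 - (∑ i, u i) ^ 2 / n) ≤ u ⬝ᵥ (L *ᵥ u) := by
    intro u
    set m : ℝ := (∑ i, u i) / n with hm
    have hs : ∑ i, u i = n * m := by rw [hm]; field_simp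
    have := lam2_le G (u - fun _ => m) (by simp [hs])
    rw [← hL, Matrix.mulVec_sub, hLc, sub_zero, sub_dotProduct] at this
    have h0 : (fun _ => m) ⬝ᵥ (L *ᵥ u) = 0 := by
      rw [Matrix.dotProduct_mulVec, ← Matrix.mulVec_transpose, hLs, hLc, zero_dotProduct]
    rw [h0, sub_zero] at this
    refine le_trans (le_of_eq ?_) this
    congr 1
    simp only [Pi.sub_apply, sub_sq, Finset.sum_add_distrib, Finset.sum_sub_distrib]
    simp only [← Finset.mul_sum, ← Finset.sum_mul, hs]
    simp
    field_simp
    ring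
  rw [h1]
  refine le_trans (le_of_eq ?_) (Finset.sum_le_sum fun k _ => h2 _)
  rw [← Finset.mul_sum, Finset.sum_sub_distrib, ← frob_U Zb Y hZb hY, frob_ZY, Finset.sum_div]
  congr 2
  rw [frobSq, Finset.sum_comm]

theorem noise1 (hn : 1 ≤ n) (hZb : ∀ i, Zb i * (Zb i)ᵀ = 1) (hY : Feasible Y)
    (Δ : Matrix (Fin n × Fin r) (Fin n × Fin r) ℝ) (t : ℝ) (ht : 0 < t) :
    ∑ q, ∑ q', Δ q q' * ((Y * Yᵀ) q q' - (Zstack Zb * (Zstack Zb)ᵀ) q q')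
      ≤ opNorm Δ * (t * (n * r - frobSq ((Zstack Zb)ᵀ * Y) / n) + n * r / t) := by
  have hn' : (0 : ℝ) < n := by exact_mod_cast hn
  have hk := key (Bd_opNorm Δ) (norm_nonneg _) (Zstack Zb) Y n (n * r) hn' ?_ ?_ ?_ ?_ t ht
  · refine le_trans (le_of_eq ?_) hk
    have : (Y * Yᵀ - Zstack Zb * (Zstack Zb)ᵀ) = (Y * Yᵀ - Zstack Zb * (Zstack Zb)ᵀ)ᵀ := by simp
    rw [this, trace_mulT]
    simp
  · ext a b
    have h : ∀ i, ((Zb i)ᵀ * Zb i) a b = (1 : Matrix (Fin r) (Fin r) ℝ) a b := by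
      intro i
      rw [mul_eq_one_comm.1 (hZb i)]
    simp only [Matrix.mul_apply, Matrix.transpose_apply] at h
    simp [Matrix.mul_apply, Zstack, Fintype.sum_prod_type, h]
  · have h := fun i c => ZZ_diag Zb hZb i c c
    simp only [Matrix.mul_apply, Matrix.transpose_apply, ← pow_two, if_true] at h
    simp [frobSq, h]
  · have h := fun i c => X_diag Y hY i c c
    simp only [Matrix.mul_apply, Matrix.transpose_apply, ← pow_two, if_true] at h
    simp [frobSq, h]
  · intro x
    have hi : ∀ i, (blk Y i *ᵥ x) ⬝ᵥ (blk Y i *ᵥ x) ≤ x ⬝ᵥ x := by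
      intro i
      set v := blk Y i *ᵥ x with hv
      have h0 : 0 ≤ (x - (blk Y i)ᵀ *ᵥ v) ⬝ᵥ (x - (blk Y i)ᵀ *ᵥ v) := by
        simp only [dotProduct]
        exact Finset.sum_nonneg fun _ _ => mul_self_nonneg _
      have h1 : x ⬝ᵥ ((blk Y i)ᵀ *ᵥ v) = v ⬝ᵥ v := by
        rw [Matrix.dotProduct_mulVec, Matrix.vecMul_transpose, ← hv]
      have h2 : ((blk Y i)ᵀ *ᵥ v) ⬝ᵥ ((blk Y i)ᵀ *ᵥ v) = v ⬝ᵥ v := by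
        rw [Matrix.dotProduct_mulVec, Matrix.vecMul_transpose, Matrix.mulVec_mulVec, hY i,
          Matrix.one_mulVec]
      rw [sub_dotProduct, dotProduct_sub, dotProduct_sub, h2, dotProduct_comm ((blk Y i)ᵀ *ᵥ v) x, h1] at h0
      linarith
    have : (Y *ᵥ x) ⬝ᵥ (Y *ᵥ x) = ∑ i, (blk Y i *ᵥ x) ⬝ᵥ (blk Y i *ᵥ x) := by
      simp [dotProduct, Matrix.mulVec, Fintype.sum_prod_type, blk]
    rw [this]
    refine (Finset.sum_le_sum fun i _ => hi i).trans ?_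
    simp

theorem noise2 (hn : 1 ≤ n) (hr : 1 ≤ r) (hZb : ∀ i, Zb i * (Zb i)ᵀ = 1) (hY : Feasible Y)
    (Δ : Matrix (Fin n × Fin r) (Fin n × Fin r) ℝ) (t : ℝ) (ht : 0 < t) :
    ∑ q, ∑ q', Δ q q' * ((r - (Uv Zb Y * (Uv Zb Y)ᵀ) q.1 q'.1) * (Y * Yᵀ) q q')
      ≤ r * opNorm Δ * (t * (n * r - frobSq ((Zstack Zb)ᵀ * Y) / n) + n * r / t) := by
  have hn' : (0 : ℝ) < n := by exact_mod_cast hn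
  have hr' : (0 : ℝ) < r := by exact_mod_cast hr
  set N : Matrix (Fin n) (Fin n) ℝ :=
    Matrix.of fun i j => ∑ c, ∑ c', Δ (i, c) (j, c') * (Y * Yᵀ) (i, c) (j, c') with hN
  have hBd : Bd N (r * opNorm Δ) := by
    intro x z s hs
    let F : (Fin n → ℝ) → Matrix (Fin n × Fin r) (Fin p) ℝ := fun x => Matrix.of fun q b => x q.1 * Y q b
    have hF : ∀ x, frobSq (F x) = r * (x ⬝ᵥ x) := by
      intro x
      have h := fun i c => X_diag Y hY i c c
      simp only [Matrix.mul_apply, Matrix.transpose_apply, ← pow_two, if_true] at h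
      simp only [frobSq, F, Matrix.of_apply, mul_pow, ← Finset.mul_sum, Fintype.sum_prod_type, h, dotProduct]
      simp only [Finset.mul_sum, Finset.sum_const, Finset.card_univ, Fintype.card_fin, nsmul_eq_mul]
      refine Finset.sum_congr rfl fun i _ => ?_
      ring
    have h1 := (Bd_opNorm Δ).mat (F x) (F z) s hs
    have h2 : ((F x)ᵀ * Δ * F z).trace = x ⬝ᵥ (N *ᵥ z) := by
      have : ((F x)ᵀ * Δ * F z).trace = (Δ * (F x * (F z)ᵀ)ᵀ).trace := by
        rw [Matrix.mul_assoc, Matrix.trace_mul_comm, Matrix.mul_assoc, Matrix.transpose_mul,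
          Matrix.transpose_transpose]
      rw [this, trace_mulT]
      simp only [Fintype.sum_prod_type, dotProduct, Matrix.mulVec, hN, Matrix.of_apply]
      refine Finset.sum_congr rfl fun i _ => ?_
      rw [Finset.sum_comm, Finset.mul_sum]
      refine Finset.sum_congr rfl fun j _ => ?_
      simp only [Finset.sum_mul, Finset.mul_sum]
      refine Finset.sum_congr rfl fun c _ => Finset.sum_congr rfl fun c' _ => ?_
      simp only [F, Matrix.mul_apply, Matrix.of_apply, Matrix.transpose_apply]
      have : ∀ b, x i * Y (i, c) b * (z j * Y (j, c') b) = (x i * z j) * (Y (i, c) b * Y (j, c') b) := by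
        intro b; ring
      simp only [this, ← Finset.mul_sum]
      ring
    rw [h2, hF, hF] at h1
    refine h1.trans (le_of_eq ?_)
    ring
  let Q : Matrix (Fin n) Unit ℝ := Matrix.of fun _ _ => √(r : ℝ)
  have hsq : √(r : ℝ) * √(r : ℝ) = r := Real.mul_self_sqrt hr'.le
  have hUF := frob_U Zb Y hZb hY
  have hk := key hBd.neg (mul_nonneg hr'.le (norm_nonneg _)) Q (Uv Zb Y) (n * r) (n * r)
    (by positivity) ?_ ?_ hUF ?_ t ht
  · have e1 : frobSq (Qᵀ * Uv Zb Y) / (n * r) = frobSq ((Zstack Zb)ᵀ * Y) / n := by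
      rw [frob_ZY]
      have : frobSq (Qᵀ * Uv Zb Y) = r * ∑ k, (∑ i, Uv Zb Y i k) ^ 2 := by
        simp [frobSq, Q, Matrix.mul_apply, ← Finset.mul_sum, mul_pow]
      rw [this]
      field_simp
    rw [e1] at hk
    refine le_trans (le_of_eq ?_) hk
    have hT : (Uv Zb Y * (Uv Zb Y)ᵀ - Q * Qᵀ) = (Uv Zb Y * (Uv Zb Y)ᵀ - Q * Qᵀ)ᵀ := by simp
    have hQQ : ∀ i j, (Q * Qᵀ) i j = r := by
      intro i j
      simp [Matrix.mul_apply, Q]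
    rw [hT, trace_mulT]
    simp only [Fintype.sum_prod_type]
    refine Finset.sum_congr rfl fun i _ => ?_
    rw [Finset.sum_comm]
    refine Finset.sum_congr rfl fun j _ => ?_
    rw [Matrix.sub_apply, hQQ, Matrix.neg_apply, hN, Matrix.of_apply, neg_mul, ← mul_neg, neg_sub]
    simp only [Finset.sum_mul]
    refine Finset.sum_congr rfl fun c _ => Finset.sum_congr rfl fun c' _ => ?_
    ring
  · ext a b
    simp [Matrix.mul_apply, Q]
  · simp [frobSq, Q]
  · intro x
    rw [← hUF]
    simp only [frobSq, dotProduct, Finset.sum_mul]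
    refine Finset.sum_le_sum fun i _ => ?_
    have := Finset.sum_mul_sq_le_sq_mul_sq Finset.univ (fun k => Uv Zb Y i k) x
    simpa [Matrix.mulVec, dotProduct, pow_two, Finset.sum_mul] using this

end

end SyncPaper

namespace SyncPaper

/-- **Theorem 1.6 (error bound for all second-order critical points).**  Suppose `G` is connected
and `p > r + 2`, and set `C_p = 2(p + r − 2)/(p − r − 2)`.  Then every second-order critical
point `Y` of the rank-`p` problem satisfies
`⟨Z Zᵀ, Y Yᵀ⟩ ≥ (1 − C_p² ‖Δ‖²/λ₂²) n² r`. -/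
theorem noisy_error_bound
    (n r p : ℕ) (hn : 1 ≤ n) (hr : 1 ≤ r) (hrp : r ≤ p) (hp : r + 2 < p)
    (G : SimpleGraph (Fin n)) [DecidableRel G.Adj] (hG : G.Connected)
    (Zb : Fin n → Matrix (Fin r) (Fin r) ℝ) (hZb : ∀ i, Zb i * (Zb i)ᵀ = 1)
    (Δ : Matrix (Fin n × Fin r) (Fin n × Fin r) ℝ) (hΔsym : Δᵀ = Δ)
    (hΔsupp : ∀ q q' : Fin n × Fin r, ¬ G.Adj q.1 q'.1 → Δ q q' = 0)
    (Lhat : Matrix (Fin n × Fin r) (Fin n × Fin r) ℝ)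
    (hLhat : Lhat = LZmat (G.lapMatrix ℝ) Zb - Δ)
    (Cp : ℝ) (hCp : Cp = 2 * ((p : ℝ) + r - 2) / ((p : ℝ) - r - 2))
    (Y : Matrix (Fin n × Fin r) (Fin p) ℝ)
    (hY : IsSecondOrderCritical Lhat Y) :
    ((Zstack Zb * (Zstack Zb)ᵀ) * (Y * Yᵀ)ᵀ).trace ≥
      (1 - Cp ^ 2 * opNorm Δ ^ 2 / lam2 (G.lapMatrix ℝ) ^ 2) * ((n : ℝ) ^ 2 * r) := by
  have hn' : (0 : ℝ) < n := by exact_mod_cast hn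
  have hr' : (0 : ℝ) < r := by exact_mod_cast hr
  have hp' : (r : ℝ) + 2 < p := by exact_mod_cast hp
  have hF := hY.1
  have hsec := second_order Zb Y hZb Lhat hY
  have hlap := lap_bound Zb Y hZb hF G
  have hpo := poincare Zb Y hn hZb hF G
  set τ := frobSq ((Zstack Zb)ᵀ * Y) with hτ
  have htr : ((Zstack Zb * (Zstack Zb)ᵀ) * (Y * Yᵀ)ᵀ).trace = τ := by
    rw [hτ, ← trace_eq_frob, Matrix.trace_mul_comm]
    simp only [Matrix.transpose_mul, Matrix.transpose_transpose, Matrix.mul_assoc]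
    rw [Matrix.trace_mul_comm]
    simp only [Matrix.mul_assoc]
  rw [htr]
  set ν := opNorm Δ with hν
  have hν0 : 0 ≤ ν := norm_nonneg _
  set lam := lam2 (G.lapMatrix ℝ) with hlam
  set P := ∑ i, ∑ j, G.lapMatrix ℝ i j * (Uv Zb Y * (Uv Zb Y)ᵀ) i j with hP
  set c : ℝ := (p : ℝ) + r - 2 with hc
  set a : ℝ := (p : ℝ) - r - 2 with ha
  have ha0 : 0 < a := by rw [ha]; linarith
  have hc0 : 0 < c := by rw [hc]; linarith
  set s : ℝ := n * r - τ / n with hs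
  have hτs : τ = n ^ 2 * r - n * s := by
    rw [hs]
    field_simp
    ring
  -- the main inequality
  have hmain : ∀ t : ℝ, 0 < t → a * P ≤ c * ν * (t * s + n * r / t) := by
    intro t ht
    have h1 := noise1 Zb Y hn hZb hF Δ t ht
    have h2 := noise2 Zb Y hn hr hZb hF Δ t ht
    rw [← hτ, ← hν, ← hs] at h1 h2
    have h3 : ∑ q, ∑ q', Lhat q q' * (Emat Zb Y q q' - c * (Y * Yᵀ) q q')
        = ∑ q, ∑ q', LZmat (G.lapMatrix ℝ) Zb q q' * (Emat Zb Y q q' - c * (Y * Yᵀ) q q')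
          + ((p - 2) * ∑ q, ∑ q', Δ q q' * ((Y * Yᵀ) q q' - (Zstack Zb * (Zstack Zb)ᵀ) q q')
          + ∑ q, ∑ q', Δ q q' * ((r - (Uv Zb Y * (Uv Zb Y)ᵀ) q.1 q'.1) * (Y * Yᵀ) q q')) := by
      simp only [Finset.mul_sum, ← Finset.sum_add_distrib]
      refine Finset.sum_congr rfl fun q _ => Finset.sum_congr rfl fun q' _ => ?_
      rw [hLhat, hc]
      simp only [Matrix.sub_apply, Emat, Matrix.of_apply]
      ring
    rw [h3] at hsec
    have h4 : ((p : ℝ) - 2) * ∑ q, ∑ q', Δ q q' * ((Y * Yᵀ) q q' - (Zstack Zb * (Zstack Zb)ᵀ) q q')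
        ≤ (p - 2) * (ν * (t * s + n * r / t)) :=
      mul_le_mul_of_nonneg_left h1 (by linarith)
    have h5 : c * ν * (t * s + n * r / t)
        = (p - 2) * (ν * (t * s + n * r / t)) + r * ν * (t * s + n * r / t) := by
      rw [hc]; ring
    linarith
  rcases Nat.lt_or_ge n 2 with h1 | h2
  · -- a single vertex
    obtain rfl : n = 1 := by omega
    have hτr : τ = r := by
      have h5 := T_diag Zb Y hZb hF 0
      rw [hτ, frob_ZY]
      simp only [Matrix.mul_apply, Matrix.transpose_apply] at h5
      simpa [pow_two] using h5
    rw [hτr]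
    have h6 : 0 ≤ Cp ^ 2 * ν ^ 2 / lam ^ 2 := by positivity
    simp only [Nat.cast_one, one_pow, one_mul]
    nlinarith
  · have hl : 0 < lam := lam2_pos h2 G hG
    have hfin : ∀ t : ℝ, 0 < t → a * lam * s ≤ c * ν * (t * s + n * r / t) := by
      intro t ht
      refine le_trans ?_ (hmain t ht)
      rw [mul_assoc]
      exact mul_le_mul_of_nonneg_left hpo ha0.le
    have hgoal : s ≤ Cp ^ 2 * ν ^ 2 / lam ^ 2 * (n * r) := by
      rcases eq_or_lt_of_le hν0 with h0 | h0
      · have := hfin 1 one_pos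
        rw [← h0] at this ⊢
        have h7 : 0 < a * lam := by positivity
        have h8 : s ≤ 0 := by nlinarith
        simpa using h8
      · have := hfin (a * lam / (2 * (c * ν))) (by positivity)
        have h9 : c * ν * (a * lam / (2 * (c * ν)) * s + n * r / (a * lam / (2 * (c * ν))))
            = a * lam * s / 2 + 2 * (c * ν) ^ 2 * (n * r) / (a * lam) := by
          field_simp
        rw [h9] at this
        have h10 : a * lam * s ≤ 4 * (c * ν) ^ 2 * (n * r) / (a * lam) := by
          have : 4 * (c * ν) ^ 2 * (n * r) / (a * lam) = 2 * (2 * (c * ν) ^ 2 * (n * r) / (a * lam)) := by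
            ring
          linarith
        have h11 : Cp ^ 2 * ν ^ 2 / lam ^ 2 * (n * r)
            = (4 * (c * ν) ^ 2 * (n * r) / (a * lam)) / (a * lam) := by
          rw [hCp]
          field_simp
          ring
        rw [h11, le_div_iff₀ (by positivity)]
        linarith
    have h12 := mul_le_mul_of_nonneg_left hgoal hn'.le
    rw [hτs, ge_iff_le, sub_mul, one_mul]
    have h13 : Cp ^ 2 * ν ^ 2 / lam ^ 2 * ((n : ℝ) ^ 2 * r)
        = n * (Cp ^ 2 * ν ^ 2 / lam ^ 2 * (n * r)) := by ring
    linarith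

end SyncPaper
end

section
/- Suppose G is connected and ‖Δ‖ < λ₂/(2√5 · √(rn)). Then: (i) the SDP relaxation min{⟨L̂, X⟩ : X positive semidefinite, SBD(X) = I_{rn}} has a unique optimal solution X̂, and rank(X̂) = r; (ii) the unrelaxed problem min{⟨L̂, W Wᵀ⟩ : W ∈ ℝ^{rn×r} with all r×r blocks W_i orthogonal} has a solution Ẑ that is unique up to right-multiplication by an element of O(r); (iii) X̂ = Ẑ Ẑᵀ. -/
open Matrix MeasureTheory ProbabilityTheory
open scoped Kronecker BigOperators

namespace SyncPaper

lemma opNorm_bilin {m : Type*} [Fintype m] [DecidableEq m] (M : Matrix m m ℝ) (x y : m → ℝ) :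
    x ⬝ᵥ (M *ᵥ y) ≤ opNorm M * (Real.sqrt (x ⬝ᵥ x) * Real.sqrt (y ⬝ᵥ y)) := by
  have hn : ∀ z : m → ℝ, ‖(WithLp.toLp 2 z : EuclideanSpace ℝ m)‖ = Real.sqrt (z ⬝ᵥ z) := by
    intro z
    rw [EuclideanSpace.norm_eq]
    congr 1
    simp [dotProduct, sq]
  have h1 := ((Matrix.toEuclideanLin (𝕜 := ℝ) (m := m) (n := m)).trans
      LinearMap.toContinuousLinearMap M).le_opNorm (WithLp.toLp 2 y)
  have h2 := real_inner_le_norm (WithLp.toLp 2 x : EuclideanSpace ℝ m) 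
    (((Matrix.toEuclideanLin (𝕜 := ℝ) (m := m) (n := m)).trans
      LinearMap.toContinuousLinearMap M) (WithLp.toLp 2 y))
  have h3 : inner ℝ (WithLp.toLp 2 x : EuclideanSpace ℝ m) 
    (((Matrix.toEuclideanLin (𝕜 := ℝ) (m := m) (n := m)).trans
      LinearMap.toContinuousLinearMap M) (WithLp.toLp 2 y)) = x ⬝ᵥ (M *ᵥ y) := by
    simp [EuclideanSpace.inner_eq_star_dotProduct, dotProduct_comm]
  rw [h3, hn x] at h2
  rw [hn y] at h1
  refine h2.trans ?_
  calc _ ≤ Real.sqrt (x ⬝ᵥ x) * (opNorm M * Real.sqrt (y ⬝ᵥ y)) :=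
        mul_le_mul_of_nonneg_left h1 (Real.sqrt_nonneg _)
    _ = _ := by ring

lemma opNorm_young {m : Type*} [Fintype m] [DecidableEq m] (M : Matrix m m ℝ) (x y : m → ℝ)
    (d s : ℝ) (hd : opNorm M ≤ d) (hs : 0 < s) :
    2 * (x ⬝ᵥ (M *ᵥ y)) ≤ d * (s * (x ⬝ᵥ x) + (y ⬝ᵥ y) / s) := by
  have h := opNorm_bilin M x y
  have h0 : 0 ≤ opNorm M := norm_nonneg _
  have hx : 0 ≤ x ⬝ᵥ x := by simpa using dotProduct_star_self_nonneg x
  have hy : 0 ≤ y ⬝ᵥ y := by simpa using dotProduct_star_self_nonneg y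
  set a := Real.sqrt (x ⬝ᵥ x)
  set b := Real.sqrt (y ⬝ᵥ y)
  have ha : a ^ 2 = x ⬝ᵥ x := Real.sq_sqrt hx
  have hb : b ^ 2 = y ⬝ᵥ y := Real.sq_sqrt hy
  have hab : 2 * (a * b) ≤ s * (x ⬝ᵥ x) + (y ⬝ᵥ y) / s := by
    rw [← ha, ← hb]
    have : s * a ^ 2 + b ^ 2 / s - 2 * (a * b) = (s * a - b) ^ 2 / s := by
      field_simp; ring
    have h2 : 0 ≤ (s * a - b) ^ 2 / s := by positivity
    linarith
  have hab0 : 0 ≤ a * b := mul_nonneg (Real.sqrt_nonneg _) (Real.sqrt_nonneg _)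
  nlinarith [mul_le_mul_of_nonneg_right hd hab0]

/-- adjacency weight -/
noncomputable def wt {n : ℕ} (G : SimpleGraph (Fin n)) [DecidableRel G.Adj] (i j : Fin n) : ℝ :=
  if G.Adj i j then 1 else 0

lemma wt_nonneg {n : ℕ} (G : SimpleGraph (Fin n)) [DecidableRel G.Adj] (i j : Fin n) :
    0 ≤ wt G i j := by unfold wt; split_ifs <;> norm_num

lemma wt_symm {n : ℕ} (G : SimpleGraph (Fin n)) [DecidableRel G.Adj] (i j : Fin n) :
    wt G i j = wt G j i := by unfold wt; simp [G.adj_comm]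

lemma lap_mulVec {n : ℕ} (G : SimpleGraph (Fin n)) [DecidableRel G.Adj] (u : Fin n → ℝ)
    (i : Fin n) : (G.lapMatrix ℝ *ᵥ u) i = ∑ j, wt G i j * (u i - u j) := by
  rw [SimpleGraph.lapMatrix_mulVec_apply]
  simp only [wt, mul_sub, Finset.sum_sub_distrib, ite_mul, one_mul, zero_mul]
  congr 1
  · rw [← Finset.sum_filter, Finset.sum_const, nsmul_eq_mul, ← SimpleGraph.card_neighborFinset_eq_degree,
      SimpleGraph.neighborFinset_eq_filter]
  · rw [← Finset.sum_filter, SimpleGraph.neighborFinset_eq_filter]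

lemma lap_quad {n : ℕ} (G : SimpleGraph (Fin n)) [DecidableRel G.Adj] (u : Fin n → ℝ) :
    u ⬝ᵥ (G.lapMatrix ℝ *ᵥ u) = ∑ i, ∑ j, wt G i j * ((u i - u j) ^ 2 / 2) := by
  have h1 : u ⬝ᵥ (G.lapMatrix ℝ *ᵥ u) = ∑ i, ∑ j, wt G i j * (u i * (u i - u j)) := by
    simp only [dotProduct, lap_mulVec, Finset.mul_sum]
    refine Finset.sum_congr rfl fun i _ => Finset.sum_congr rfl fun j _ => by ring
  have h2 : u ⬝ᵥ (G.lapMatrix ℝ *ᵥ u) = ∑ i, ∑ j, wt G i j * (u j * (u j - u i)) := by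
    rw [h1, Finset.sum_comm]
    refine Finset.sum_congr rfl fun i _ => Finset.sum_congr rfl fun j _ => by rw [wt_symm]
  have : u ⬝ᵥ (G.lapMatrix ℝ *ᵥ u) = (u ⬝ᵥ (G.lapMatrix ℝ *ᵥ u) + u ⬝ᵥ (G.lapMatrix ℝ *ᵥ u)) / 2 := by
    ring
  rw [this]
  nth_rewrite 1 [h1]
  rw [h2, ← Finset.sum_add_distrib, Finset.sum_div]
  refine Finset.sum_congr rfl fun i _ => ?_
  rw [← Finset.sum_add_distrib, Finset.sum_div]
  refine Finset.sum_congr rfl fun j _ => by ring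

lemma lap_nonneg {n : ℕ} (G : SimpleGraph (Fin n)) [DecidableRel G.Adj] (u : Fin n → ℝ) :
    0 ≤ u ⬝ᵥ (G.lapMatrix ℝ *ᵥ u) := by
  rw [lap_quad]
  exact Finset.sum_nonneg fun i _ => Finset.sum_nonneg fun j _ =>
    mul_nonneg (wt_nonneg _ _ _) (by positivity)

lemma poincare_s5 {n : ℕ} (G : SimpleGraph (Fin n)) [DecidableRel G.Adj] (u : Fin n → ℝ)
    (hu : ∑ i, u i = 0) :
    lam2 (G.lapMatrix ℝ) * ∑ i, u i ^ 2 ≤ u ⬝ᵥ (G.lapMatrix ℝ *ᵥ u) := by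
  have h0 : 0 ≤ ∑ i, u i ^ 2 := Finset.sum_nonneg fun i _ => sq_nonneg _
  rcases h0.eq_or_lt with h | h
  · rw [← h, mul_zero]; exact lap_nonneg G u
  · set t := ∑ i, u i ^ 2
    have hs : 0 < Real.sqrt t := Real.sqrt_pos.2 h
    have hst : Real.sqrt t ^ 2 = t := Real.sq_sqrt h0
    have : lam2 (G.lapMatrix ℝ) ≤ (u ⬝ᵥ (G.lapMatrix ℝ *ᵥ u)) / t := by
      refine csInf_le ⟨0, ?_⟩ ⟨fun i => (Real.sqrt t)⁻¹ * u i, ?_, ?_, ?_⟩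
      · rintro _ ⟨x, -, -, rfl⟩
        exact lap_nonneg G x
      · rw [← Finset.mul_sum, hu, mul_zero]
      · simp only [mul_pow]
        rw [← Finset.mul_sum, inv_pow, hst]
        exact inv_mul_cancel₀ h.ne'
      · have : (fun i => (Real.sqrt t)⁻¹ * u i) = (Real.sqrt t)⁻¹ • u := rfl
        rw [this, Matrix.mulVec_smul, smul_dotProduct, dotProduct_smul]
        simp only [smul_eq_mul]
        rw [div_eq_mul_inv, ← mul_assoc, ← mul_inv, Real.mul_self_sqrt h0, mul_comm]
    rwa [le_div_iff₀ h] at this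

lemma Dmat_mul_transpose {n r : ℕ} (Zb : Fin n → Matrix (Fin r) (Fin r) ℝ)
    (hZb : ∀ i, Zb i * (Zb i)ᵀ = 1) : Dmat Zb * (Dmat Zb)ᵀ = 1 := by
  ext ⟨i, a⟩ ⟨j, b⟩
  rw [Matrix.mul_apply, Fintype.sum_prod_type]
  by_cases hij : i = j
  · subst hij
    have := congrFun (congrFun (hZb i) a) b
    simp [Dmat, Matrix.mul_apply, Matrix.one_apply] at this ⊢
    simpa [ite_and] using this
  · simp [Dmat, Matrix.one_apply, hij, ite_and]

lemma Dmat_transpose_mulVec {n r : ℕ} (Zb : Fin n → Matrix (Fin r) (Fin r) ℝ)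
    (x : Fin n × Fin r → ℝ) (i : Fin n) (b : Fin r) :
    ((Dmat Zb)ᵀ *ᵥ x) (i, b) = ∑ a, Zb i a b * x (i, a) := by
  simp [Matrix.mulVec, dotProduct, Fintype.sum_prod_type, Dmat]

/-- bilinear form of `L_Z` -/
lemma LZ_bilin {n r : ℕ} (L : Matrix (Fin n) (Fin n) ℝ) (Zb : Fin n → Matrix (Fin r) (Fin r) ℝ)
    (y x : Fin n × Fin r → ℝ) :
    y ⬝ᵥ (LZmat L Zb *ᵥ x) = ∑ b, (fun i => ((Dmat Zb)ᵀ *ᵥ y) (i, b)) ⬝ᵥ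
      (L *ᵥ fun i => ((Dmat Zb)ᵀ *ᵥ x) (i, b)) := by
  unfold LZmat
  rw [← Matrix.mulVec_mulVec, ← Matrix.mulVec_mulVec, Matrix.dotProduct_mulVec,
    ← Matrix.mulVec_transpose]
  set Y := (Dmat Zb)ᵀ *ᵥ y
  set X := (Dmat Zb)ᵀ *ᵥ x
  have : ∀ i b, ((L ⊗ₖ (1 : Matrix (Fin r) (Fin r) ℝ)) *ᵥ X) (i, b) = 
     (L *ᵥ fun i => X (i, b)) i := by
    intro i b
    simp [Matrix.mulVec, dotProduct, Fintype.sum_prod_type, Matrix.kroneckerMap_apply,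
      Matrix.one_apply]
  simp only [dotProduct, Fintype.sum_prod_type, this]
  rw [Finset.sum_comm]

lemma D_isometry {n r : ℕ} (Zb : Fin n → Matrix (Fin r) (Fin r) ℝ)
    (hZb : ∀ i, Zb i * (Zb i)ᵀ = 1) (x y : Fin n × Fin r → ℝ) (i : Fin n) :
    ∑ b, ((Dmat Zb)ᵀ *ᵥ x) (i, b) * ((Dmat Zb)ᵀ *ᵥ y) (i, b) = ∑ a, x (i, a) * y (i, a) := by
  have h1 : ∀ x : Fin n × Fin r → ℝ, (fun b => ((Dmat Zb)ᵀ *ᵥ x) (i, b)) =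
      (Zb i)ᵀ *ᵥ (fun a => x (i, a)) := by
    intro x; ext b
    rw [Dmat_transpose_mulVec]; rfl
  have : (fun b => ((Dmat Zb)ᵀ *ᵥ x) (i, b)) ⬝ᵥ (fun b => ((Dmat Zb)ᵀ *ᵥ y) (i, b))
     = (fun a => x (i, a)) ⬝ᵥ (fun a => y (i, a)) := by
    rw [h1, h1, Matrix.mulVec_transpose, ← Matrix.dotProduct_mulVec, Matrix.mulVec_mulVec, hZb,
      Matrix.one_mulVec]
  exact this

end SyncPaper
namespace SyncPaper

lemma ip_mul_transpose {n r p : ℕ} (M : Matrix (Fin n × Fin r) (Fin n × Fin r) ℝ)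
    (W : Matrix (Fin n × Fin r) (Fin p) ℝ) :
    ip M (W * Wᵀ) = ∑ c, W.col c ⬝ᵥ (M *ᵥ W.col c) := by
  unfold ip
  rw [Matrix.transpose_mul, Matrix.transpose_transpose, ← Matrix.mul_assoc, Matrix.trace_mul_comm]
  simp only [Matrix.trace, Matrix.diag, Matrix.mul_apply, dotProduct, Matrix.mulVec,
    Matrix.transpose_apply, Matrix.col_apply]

lemma feas_row {n r : ℕ} {Y : Matrix (Fin n × Fin r) (Fin r) ℝ} (hY : Feasible Y) (i : Fin n)
    (a b : Fin r) : ∑ c, Y (i, a) c * Y (i, b) c = if a = b then 1 else 0 := by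
  have := congrFun (congrFun (hY i) a) b
  simpa [Matrix.mul_apply, blk, Matrix.one_apply] using this

lemma feas_frob {n r : ℕ} {Y : Matrix (Fin n × Fin r) (Fin r) ℝ} (hY : Feasible Y) :
    ∑ c, Y.col c ⬝ᵥ Y.col c = (r * n : ℝ) := by
  simp only [dotProduct, Matrix.col_apply]
  rw [Finset.sum_comm, Fintype.sum_prod_type]
  simp [feas_row hY]
  ring

/-- gauge-transformed blocks -/
def Vb {n r : ℕ} (Zb : Fin n → Matrix (Fin r) (Fin r) ℝ)
    (Y : Matrix (Fin n × Fin r) (Fin r) ℝ) (i : Fin n) : Matrix (Fin r) (Fin r) ℝ :=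
  (Zb i)ᵀ * blk Y i

lemma Vb_eq {n r : ℕ} (Zb : Fin n → Matrix (Fin r) (Fin r) ℝ)
    (Y : Matrix (Fin n × Fin r) (Fin r) ℝ) (i : Fin n) (b c : Fin r) :
    ((Dmat Zb)ᵀ *ᵥ Y.col c) (i, b) = Vb Zb Y i b c := by
  rw [Dmat_transpose_mulVec]
  simp [Vb, Matrix.mul_apply, blk]

lemma Vb_orth {n r : ℕ} (Zb : Fin n → Matrix (Fin r) (Fin r) ℝ)
    (hZb : ∀ i, Zb i * (Zb i)ᵀ = 1)
    (Y : Matrix (Fin n × Fin r) (Fin r) ℝ) (hY : Feasible Y) (i : Fin n) :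
    Vb Zb Y i * (Vb Zb Y i)ᵀ = 1 := by
  unfold Vb
  rw [Matrix.transpose_mul, Matrix.transpose_transpose, Matrix.mul_assoc,
    ← Matrix.mul_assoc (blk Y i), hY i, Matrix.one_mul]
  exact mul_eq_one_comm.1 (hZb i)

/-- the energy -/
noncomputable def En {n r : ℕ} (G : SimpleGraph (Fin n)) [DecidableRel G.Adj]
    (Zb : Fin n → Matrix (Fin r) (Fin r) ℝ) (Y : Matrix (Fin n × Fin r) (Fin r) ℝ) : ℝ :=
  ∑ c, ∑ b, (fun i => Vb Zb Y i b c) ⬝ᵥ (G.lapMatrix ℝ *ᵥ fun i => Vb Zb Y i b c)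

lemma En_eq {n r : ℕ} (G : SimpleGraph (Fin n)) [DecidableRel G.Adj]
    (Zb : Fin n → Matrix (Fin r) (Fin r) ℝ) (Y : Matrix (Fin n × Fin r) (Fin r) ℝ) :
    ∑ c, Y.col c ⬝ᵥ (LZmat (G.lapMatrix ℝ) Zb *ᵥ Y.col c) = En G Zb Y := by
  unfold En
  simp only [LZ_bilin, Vb_eq]

lemma scalar_var {n : ℕ} (hn : 1 ≤ n) (G : SimpleGraph (Fin n)) [DecidableRel G.Adj]
    (u : Fin n → ℝ) :
    lam2 (G.lapMatrix ℝ) * (∑ j, ∑ i, (u i - u j) ^ 2) ≤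
      2 * n * (u ⬝ᵥ (G.lapMatrix ℝ *ᵥ u)) := by
  have hn' : (n : ℝ) ≠ 0 := by positivity
  set m := (∑ i, u i) / n
  have hm : n * m = ∑ i, u i := by simp only [m]; field_simp
  have h1 := poincare_s5 G (fun i => u i - m) (by
    rw [Finset.sum_sub_distrib]; simp [hm])
  have h2 : (fun i => u i - m) ⬝ᵥ (G.lapMatrix ℝ *ᵥ (fun i => u i - m)) =
      u ⬝ᵥ (G.lapMatrix ℝ *ᵥ u) := by
    rw [lap_quad, lap_quad]; simp
  have h3 : ∑ j, ∑ i, (u i - u j) ^ 2 = 2 * n * ∑ i, (u i - m) ^ 2 := by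
    simp only [sub_sq, Finset.sum_add_distrib, Finset.sum_sub_distrib]
    simp only [mul_assoc, ← Finset.mul_sum, ← Finset.sum_mul]
    simp [← hm, ← Finset.mul_sum, ← Finset.sum_mul]
    ring
  rw [h2] at h1
  rw [h3]
  nlinarith [show (0:ℝ) ≤ n by positivity]

lemma exists_center {n r : ℕ} (hn : 1 ≤ n) (G : SimpleGraph (Fin n)) [DecidableRel G.Adj]
    (V : Fin n → Matrix (Fin r) (Fin r) ℝ) :
    ∃ j, lam2 (G.lapMatrix ℝ) * (∑ c, ∑ b, ∑ i, (V i b c - V j b c) ^ 2) ≤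
      2 * ∑ c, ∑ b, (fun i => V i b c) ⬝ᵥ (G.lapMatrix ℝ *ᵥ fun i => V i b c) := by
  have : Nonempty (Fin n) := ⟨⟨0, hn⟩⟩
  have key : ∑ j, lam2 (G.lapMatrix ℝ) * (∑ c, ∑ b, ∑ i, (V i b c - V j b c) ^ 2) ≤
      ∑ _j : Fin n, 2 * ∑ c, ∑ b, (fun i => V i b c) ⬝ᵥ
        (G.lapMatrix ℝ *ᵥ fun i => V i b c) := by
    rw [Finset.sum_const, Finset.card_univ, Fintype.card_fin, nsmul_eq_mul, ← mul_assoc,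
      mul_comm (n : ℝ) 2, ← Finset.mul_sum, Finset.sum_comm, Finset.mul_sum, Finset.mul_sum]
    refine Finset.sum_le_sum fun c _ => ?_
    rw [Finset.sum_comm, Finset.mul_sum, Finset.mul_sum]
    exact Finset.sum_le_sum fun b _ => scalar_var hn G _
  obtain ⟨j, -, hj⟩ := Finset.exists_le_of_sum_le Finset.univ_nonempty key
  exact ⟨j, hj⟩

lemma energy_bound {n r : ℕ} (hn : 1 ≤ n) (hr : 1 ≤ r)
    (G : SimpleGraph (Fin n)) [DecidableRel G.Adj]
    (Zb : Fin n → Matrix (Fin r) (Fin r) ℝ) (hZb : ∀ i, Zb i * (Zb i)ᵀ = 1)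
    (Δ : Matrix (Fin n × Fin r) (Fin n × Fin r) ℝ) (hΔsym : Δᵀ = Δ)
    (Lhat : Matrix (Fin n × Fin r) (Fin n × Fin r) ℝ)
    (hLhat : Lhat = LZmat (G.lapMatrix ℝ) Zb - Δ)
    (hlam : 0 < lam2 (G.lapMatrix ℝ))
    (hΔsmall : opNorm Δ ≤ lam2 (G.lapMatrix ℝ) / (2 * Real.sqrt 5 * Real.sqrt (r * n)))
    (Y : Matrix (Fin n × Fin r) (Fin r) ℝ) (hY : Feasible Y)
    (hmin : ∀ W : Matrix (Fin n × Fin r) (Fin r) ℝ, Feasible W →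
        ip Lhat (Y * Yᵀ) ≤ ip Lhat (W * Wᵀ)) :
    En G Zb Y ≤ 2 / 5 * lam2 (G.lapMatrix ℝ) := by
  obtain ⟨j, hj⟩ := exists_center hn G (Vb Zb Y)
  change _ ≤ 2 * En G Zb Y at hj
  set lam := lam2 (G.lapMatrix ℝ)
  set W : Matrix (Fin n × Fin r) (Fin r) ℝ :=
    Matrix.of fun q c => (Zb q.1 * Vb Zb Y j) q.2 c with hW
  have hblk : ∀ i, blk W i = Zb i * Vb Zb Y j := fun i => by ext a b; rfl
  have hWV : ∀ i, Vb Zb W i = Vb Zb Y j := by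
    intro i
    rw [Vb, hblk, ← Matrix.mul_assoc, mul_eq_one_comm.1 (hZb i), Matrix.one_mul]
  have hWf : Feasible W := by
    intro i
    rw [hblk, Matrix.transpose_mul, Matrix.mul_assoc, ← Matrix.mul_assoc (Vb Zb Y j),
      Vb_orth Zb hZb Y hY, Matrix.one_mul, hZb]
  have hWE : En G Zb W = 0 := by
    unfold En
    simp only [hWV, lap_quad]
    simp
  have h1 := hmin W hWf
  rw [ip_mul_transpose, ip_mul_transpose, hLhat] at h1
  simp only [Matrix.sub_mulVec, dotProduct_sub, Finset.sum_sub_distrib, En_eq, hWE] at h1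
  -- cross term
  have hcross : ∀ c, (Y.col c - W.col c) ⬝ᵥ (Δ *ᵥ (Y.col c + W.col c)) =
      Y.col c ⬝ᵥ (Δ *ᵥ Y.col c) - W.col c ⬝ᵥ (Δ *ᵥ W.col c) := by
    intro c
    have hs : W.col c ⬝ᵥ (Δ *ᵥ Y.col c) = Y.col c ⬝ᵥ (Δ *ᵥ W.col c) := by
      rw [Matrix.dotProduct_mulVec, ← Matrix.mulVec_transpose, hΔsym, dotProduct_comm]
    rw [Matrix.mulVec_add, sub_dotProduct, dotProduct_add, dotProduct_add, hs]
    ring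
  have hN : (0:ℝ) < r * n := by positivity
  set N : ℝ := r * n
  have hsN : 0 < Real.sqrt N := Real.sqrt_pos.2 hN
  have hsN2 : Real.sqrt N ^ 2 = N := Real.sq_sqrt hN.le
  have h5 : 0 < Real.sqrt 5 := Real.sqrt_pos.2 (by norm_num)
  have h52 : Real.sqrt 5 ^ 2 = 5 := Real.sq_sqrt (by norm_num)
  have hs : 0 < Real.sqrt 5 * Real.sqrt N := mul_pos h5 hsN
  have hyoung := Finset.sum_le_sum fun c (_ : c ∈ (Finset.univ : Finset (Fin r))) =>
    opNorm_young Δ (Y.col c - W.col c) (Y.col c + W.col c) _ _ hΔsmall hs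
  rw [← Finset.mul_sum, ← Finset.mul_sum, Finset.sum_add_distrib, ← Finset.mul_sum,
    ← Finset.sum_div] at hyoung
  simp only [hcross, Finset.sum_sub_distrib] at hyoung
  have hU : ∑ c, (Y.col c - W.col c) ⬝ᵥ (Y.col c - W.col c) =
      ∑ c, ∑ b, ∑ i, (Vb Zb Y i b c - Vb Zb Y j b c) ^ 2 := by
    refine Finset.sum_congr rfl fun c _ => ?_
    rw [dotProduct, Fintype.sum_prod_type, Finset.sum_comm (s := (Finset.univ : Finset (Fin r)))]
    refine Finset.sum_congr rfl fun i _ => ?_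
    rw [← D_isometry Zb hZb]
    refine Finset.sum_congr rfl fun b _ => ?_
    rw [Matrix.mulVec_sub, Pi.sub_apply, Vb_eq, Vb_eq, hWV, sq]
  have hP : ∑ c, (Y.col c + W.col c) ⬝ᵥ (Y.col c + W.col c) ≤ 4 * N := by
    have : ∀ c, (Y.col c + W.col c) ⬝ᵥ (Y.col c + W.col c) ≤ 2 * (Y.col c ⬝ᵥ Y.col c) +
        2 * (W.col c ⬝ᵥ W.col c) := by
      intro c
      simp only [dotProduct, Finset.mul_sum, ← Finset.sum_add_distrib]
      refine Finset.sum_le_sum fun q _ => ?_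
      simp only [Pi.add_apply]
      nlinarith [sq_nonneg (Y.col c q - W.col c q)]
    refine (Finset.sum_le_sum fun c _ => this c).trans ?_
    rw [Finset.sum_add_distrib, ← Finset.mul_sum, ← Finset.mul_sum, feas_frob hY, feas_frob hWf]
    simp only [N]; linarith
  rw [hU] at hyoung
  set T := ∑ c, ∑ b, ∑ i, (Vb Zb Y i b c - Vb Zb Y j b c) ^ 2
  have h6 : lam / (2 * Real.sqrt 5 * Real.sqrt N) * (Real.sqrt 5 * Real.sqrt N * T +
      (∑ c, (Y.col c + W.col c) ⬝ᵥ (Y.col c + W.col c)) / (Real.sqrt 5 * Real.sqrt N)) ≤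
      lam / (2 * Real.sqrt 5 * Real.sqrt N) * (Real.sqrt 5 * Real.sqrt N * T +
      (4 * N) / (Real.sqrt 5 * Real.sqrt N)) := by gcongr
  have h7 : lam / (2 * Real.sqrt 5 * Real.sqrt N) * (Real.sqrt 5 * Real.sqrt N * T +
      (4 * N) / (Real.sqrt 5 * Real.sqrt N)) = lam * T / 2 + 2 / 5 * lam := by
    have : (4 * N) / (Real.sqrt 5 * Real.sqrt N) = (4 / 5) * (Real.sqrt 5 * Real.sqrt N) := by
      rw [div_eq_iff hs.ne']
      calc 4 * N = 4 / 5 * (5 * N) := by ring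
        _ = 4 / 5 * (Real.sqrt 5 ^ 2 * Real.sqrt N ^ 2) := by rw [h52, hsN2]
        _ = _ := by ring
    rw [this]
    field_simp
    ring
  linarith

end SyncPaper
namespace SyncPaper

lemma orth_vecMul_sq {r : ℕ} (P : Matrix (Fin r) (Fin r) ℝ) (hP : P * Pᵀ = 1) (u : Fin r → ℝ) :
    ∑ c, (∑ b, u b * P b c) ^ 2 = ∑ b, u b ^ 2 := by
  have : (u ᵥ* P) ⬝ᵥ (u ᵥ* P) = u ⬝ᵥ u := by
    rw [← Matrix.dotProduct_mulVec, ← Matrix.mulVec_transpose P u, Matrix.mulVec_mulVec, hP,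
      Matrix.one_mulVec]
  simpa [dotProduct, Matrix.vecMul, sq] using this

lemma pair_bound {r : ℕ} (P Q : Matrix (Fin r) (Fin r) ℝ) (hP : P * Pᵀ = 1) (hQ : Q * Qᵀ = 1)
    (u : Fin r → ℝ) :
    ∑ c, ∑ b, (u b * ∑ b', u b' * P b' c) * (P b c - Q b c) ≤
      (∑ c, ∑ b, (P b c - Q b c) ^ 2 / 2) * ∑ b, u b ^ 2 := by
  have h1 : ∀ c, ∑ b, (u b * ∑ b', u b' * P b' c) * (P b c - Q b c) =
      (∑ b, u b * P b c) ^ 2 / 2 - (∑ b, u b * Q b c) ^ 2 / 2 +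
        (∑ b, u b * (P b c - Q b c)) ^ 2 / 2 := by
    intro c
    have e1 : ∑ b, u b * (P b c - Q b c) = (∑ b, u b * P b c) - ∑ b, u b * Q b c := by
      rw [← Finset.sum_sub_distrib]
      exact Finset.sum_congr rfl fun b _ => by ring
    have e2 : ∑ b, (u b * ∑ b', u b' * P b' c) * (P b c - Q b c) =
        (∑ b', u b' * P b' c) * ∑ b, u b * (P b c - Q b c) := by
      rw [Finset.mul_sum]
      exact Finset.sum_congr rfl fun b _ => by ring
    rw [e2, e1]; ring
  simp only [h1, Finset.sum_add_distrib, Finset.sum_sub_distrib, ← Finset.sum_div,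
    orth_vecMul_sq P hP, orth_vecMul_sq Q hQ]
  rw [sub_self, zero_add, div_mul_eq_mul_div, Finset.sum_mul]
  gcongr with c
  rw [mul_comm]
  exact Finset.sum_mul_sq_le_sq_mul_sq _ _ _

lemma SBD_quad {n r : ℕ} (M : Matrix (Fin n × Fin r) (Fin n × Fin r) ℝ)
    (x : Fin n × Fin r → ℝ) :
    x ⬝ᵥ (SBD M *ᵥ x) = ∑ i, ∑ a, ∑ b, x (i, a) * (M (i, a) (i, b) * x (i, b)) := by
  have h1 : x ⬝ᵥ (SBD M *ᵥ x) = ∑ i, ∑ a, ∑ b, x (i, a) *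
      (((M (i, a) (i, b) + M (i, b) (i, a)) / 2) * x (i, b)) := by
    simp only [dotProduct, Matrix.mulVec, Fintype.sum_prod_type, SBD, Matrix.of_apply, ite_mul,
      zero_mul, Finset.mul_sum]
    simp [Finset.sum_comm (s := (Finset.univ : Finset (Fin n)))]
  rw [h1]
  refine Finset.sum_congr rfl fun i _ => ?_
  have h2 : ∑ a, ∑ b, x (i, a) * (M (i, b) (i, a) * x (i, b)) =
      ∑ a, ∑ b, x (i, a) * (M (i, a) (i, b) * x (i, b)) := by
    rw [Finset.sum_comm]
    exact Finset.sum_congr rfl fun a _ => Finset.sum_congr rfl fun b _ => by ring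
  have h3 : ∑ a, ∑ b, x (i, a) * (((M (i, a) (i, b) + M (i, b) (i, a)) / 2) * x (i, b)) =
      (∑ a, ∑ b, x (i, a) * (M (i, a) (i, b) * x (i, b)) +
       ∑ a, ∑ b, x (i, a) * (M (i, b) (i, a) * x (i, b))) / 2 := by
    rw [← Finset.sum_add_distrib, Finset.sum_div]
    refine Finset.sum_congr rfl fun a _ => ?_
    rw [← Finset.sum_add_distrib, Finset.sum_div]
    exact Finset.sum_congr rfl fun b _ => by ring
  rw [h3, h2]; ring

/-- `y_c` has blocks `x_i (x_iᵀ Y_i)_c` -/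
def yv {n r : ℕ} (Y : Matrix (Fin n × Fin r) (Fin r) ℝ) (x : Fin n × Fin r → ℝ) (c : Fin r) :
    Fin n × Fin r → ℝ := fun q => x q * ∑ a, x (q.1, a) * Y (q.1, a) c

lemma sum_swap4 {n r : ℕ} (f : Fin r → Fin r → Fin n → Fin n → ℝ) :
    ∑ c, ∑ b, ∑ i, ∑ j, f c b i j = ∑ i, ∑ j, ∑ c, ∑ b, f c b i j := by
  calc _ = ∑ c, ∑ i, ∑ b, ∑ j, f c b i j := Finset.sum_congr rfl fun c _ => Finset.sum_comm
    _ = ∑ i, ∑ c, ∑ b, ∑ j, f c b i j := Finset.sum_comm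
    _ = ∑ i, ∑ c, ∑ j, ∑ b, f c b i j := 
      Finset.sum_congr rfl fun i _ => Finset.sum_congr rfl fun c _ => Finset.sum_comm
    _ = _ := Finset.sum_congr rfl fun i _ => Finset.sum_comm

lemma SBD_yv {n r : ℕ} (M : Matrix (Fin n × Fin r) (Fin n × Fin r) ℝ)
    (Y : Matrix (Fin n × Fin r) (Fin r) ℝ) (x : Fin n × Fin r → ℝ) :
    x ⬝ᵥ (SBD (M * Y * Yᵀ) *ᵥ x) = ∑ c, yv Y x c ⬝ᵥ (M *ᵥ Y.col c) := by
  rw [SBD_quad]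
  have hd : ∀ c (v : Fin n × Fin r → ℝ), yv Y x c ⬝ᵥ v = ∑ i, ∑ a,
      (x (i, a) * ∑ b, x (i, b) * Y (i, b) c) * v (i, a) := by
    intro c v
    simp only [dotProduct, Fintype.sum_prod_type, yv]
  simp only [hd]
  rw [Finset.sum_comm (s := (Finset.univ : Finset (Fin r))) (t := (Finset.univ : Finset (Fin n)))]
  refine Finset.sum_congr rfl fun i _ => ?_
  refine Eq.trans ?_ Finset.sum_comm
  refine Finset.sum_congr rfl fun a _ => ?_
  have : ∀ b, (M * Y * Yᵀ) (i, a) (i, b) = ∑ c, (M *ᵥ Y.col c) (i, a) * Y (i, b) c := by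
    intro b; rw [Matrix.mul_apply]; rfl
  simp only [this, Finset.sum_mul, Finset.mul_sum]
  rw [Finset.sum_comm]
  exact Finset.sum_congr rfl fun c _ => Finset.sum_congr rfl fun b _ => by ring

lemma S_pos {n r : ℕ} (hn : 1 ≤ n) (hr : 1 ≤ r)
    (G : SimpleGraph (Fin n)) [DecidableRel G.Adj]
    (Zb : Fin n → Matrix (Fin r) (Fin r) ℝ) (hZb : ∀ i, Zb i * (Zb i)ᵀ = 1)
    (Δ : Matrix (Fin n × Fin r) (Fin n × Fin r) ℝ)
    (Lhat : Matrix (Fin n × Fin r) (Fin n × Fin r) ℝ)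
    (hLhat : Lhat = LZmat (G.lapMatrix ℝ) Zb - Δ)
    (hlam : 0 < lam2 (G.lapMatrix ℝ))
    (hΔsmall : opNorm Δ ≤ lam2 (G.lapMatrix ℝ) / (2 * Real.sqrt 5 * Real.sqrt (r * n)))
    (Y : Matrix (Fin n × Fin r) (Fin r) ℝ) (hY : Feasible Y)
    (hE : En G Zb Y ≤ 2 / 5 * lam2 (G.lapMatrix ℝ))
    (x : Fin n × Fin r → ℝ) (hx0 : x ≠ 0)
    (hx : ∀ b, ∑ i, ((Dmat Zb)ᵀ *ᵥ x) (i, b) = 0) :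
    0 < x ⬝ᵥ (Smat Lhat Y *ᵥ x) := by
  set lam := lam2 (G.lapMatrix ℝ)
  have ht : 0 < x ⬝ᵥ x := by
    have := dotProduct_star_self_pos_iff.2 hx0
    simpa using this
  set u := (Dmat Zb)ᵀ *ᵥ x with hu
  have hui : ∀ i, ∑ b, u (i, b) ^ 2 = ∑ a, x (i, a) ^ 2 := by
    intro i
    have := D_isometry Zb hZb x x i
    simpa [sq] using this
  have htx : x ⬝ᵥ x = ∑ i, ∑ a, x (i, a) ^ 2 := by
    simp [dotProduct, Fintype.sum_prod_type, sq]
  have hm : ∀ i c, ∑ a, x (i, a) * Y (i, a) c = ∑ b, u (i, b) * Vb Zb Y i b c := by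
    intro i c
    have := D_isometry Zb hZb x (Y.col c) i
    simp only [Vb_eq] at this
    exact this.symm
  have hDy : ∀ c i b, ((Dmat Zb)ᵀ *ᵥ yv Y x c) (i, b) =
      u (i, b) * ∑ b', u (i, b') * Vb Zb Y i b' c := by
    intro c i b
    rw [← hm, hu, Dmat_transpose_mulVec, Dmat_transpose_mulVec, Finset.sum_mul]
    exact Finset.sum_congr rfl fun a _ => by simp only [yv]; ring
  -- norm of y
  have hyn : ∑ c, yv Y x c ⬝ᵥ yv Y x c ≤ (x ⬝ᵥ x) ^ 2 := by
    have e : ∑ c, yv Y x c ⬝ᵥ yv Y x c = ∑ i, (∑ a, x (i, a) ^ 2) ^ 2 := by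
      simp only [dotProduct, Fintype.sum_prod_type, yv]
      rw [Finset.sum_comm]
      refine Finset.sum_congr rfl fun i _ => ?_
      rw [Finset.sum_comm]
      have := orth_vecMul_sq (blk Y i) (hY i) (fun a => x (i, a))
      simp only [blk, Matrix.of_apply] at this
      rw [sq (∑ a, x (i, a) ^ 2)]
      nth_rewrite 2 [← this]
      rw [Finset.sum_mul_sum]
      exact Finset.sum_congr rfl fun a _ => Finset.sum_congr rfl fun c _ => by ring
    rw [e, htx]
    exact Finset.sum_sq_le_sq_sum_of_nonneg fun i _ => Finset.sum_nonneg fun a _ => sq_nonneg _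
  have hN : (1:ℝ) ≤ r * n := by
    have h1 : (1:ℝ) ≤ r := by exact_mod_cast hr
    have h2 : (1:ℝ) ≤ n := by exact_mod_cast hn
    nlinarith
  have hfr := feas_frob hY
  set N : ℝ := r * n
  have hsN : 1 ≤ Real.sqrt N := Real.one_le_sqrt.2 hN
  have hsN2 : Real.sqrt N ^ 2 = N := Real.sq_sqrt (by linarith)
  have h5 : 0 < Real.sqrt 5 := Real.sqrt_pos.2 (by norm_num)
  have h52 : Real.sqrt 5 ^ 2 = 5 := Real.sq_sqrt (by norm_num)
  set d := lam / (2 * Real.sqrt 5 * Real.sqrt N) with hd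
  have hd0 : 0 < d := by positivity
  have hdN : d * Real.sqrt N = lam / (2 * Real.sqrt 5) := by
    rw [hd]; field_simp
  have hdN1 : lam / (2 * Real.sqrt 5) < lam * (1 / 4) := by
    rw [div_lt_iff₀ (by positivity)]
    have : 2 < Real.sqrt 5 := by nlinarith
    nlinarith
  -- quadratic parts
  have q1 : lam * (x ⬝ᵥ x) ≤ x ⬝ᵥ (LZmat (G.lapMatrix ℝ) Zb *ᵥ x) := by
    rw [LZ_bilin]
    have : x ⬝ᵥ x = ∑ b, ∑ i, u (i, b) ^ 2 := by
      exact htx.trans ((Finset.sum_congr rfl fun i _ => (hui i).symm).trans Finset.sum_comm)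
    rw [this, Finset.mul_sum]
    exact Finset.sum_le_sum fun b _ => poincare_s5 G (fun i => u (i, b)) (hx b)
  have q2 : x ⬝ᵥ (Δ *ᵥ x) ≤ d * (x ⬝ᵥ x) := by
    have := opNorm_young Δ x x d 1 hΔsmall one_pos
    linarith
  have q3 : ∑ c, yv Y x c ⬝ᵥ (LZmat (G.lapMatrix ℝ) Zb *ᵥ Y.col c) ≤ 2 / 5 * lam * (x ⬝ᵥ x) := by
    have e1 : ∑ c, yv Y x c ⬝ᵥ (LZmat (G.lapMatrix ℝ) Zb *ᵥ Y.col c) =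
        ∑ i, ∑ j, wt G i j * ∑ c, ∑ b, (u (i, b) * ∑ b', u (i, b') * Vb Zb Y i b' c) *
          (Vb Zb Y i b c - Vb Zb Y j b c) := by
      simp only [LZ_bilin, Vb_eq, hDy]
      simp only [dotProduct, lap_mulVec, Finset.mul_sum]
      rw [sum_swap4]
      refine Finset.sum_congr rfl fun i _ => Finset.sum_congr rfl fun j _ =>
        Finset.sum_congr rfl fun c _ => Finset.sum_congr rfl fun b _ => ?_
      rw [Finset.sum_mul, Finset.sum_mul, Finset.mul_sum]
      refine Finset.sum_congr rfl fun b' _ => by ring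
    have e2 : En G Zb Y = ∑ i, ∑ j, wt G i j *
        ∑ c, ∑ b, (Vb Zb Y i b c - Vb Zb Y j b c) ^ 2 / 2 := by
      unfold En
      simp only [lap_quad, Finset.mul_sum]
      rw [sum_swap4]
    have e3 : ∀ i, ∑ b, u (i, b) ^ 2 ≤ x ⬝ᵥ x := by
      intro i
      rw [hui, htx]
      exact Finset.single_le_sum (f := fun i => ∑ a, x (i, a) ^ 2)
        (fun i _ => Finset.sum_nonneg fun a _ => sq_nonneg _) (Finset.mem_univ i)
    calc _ ≤ En G Zb Y * (x ⬝ᵥ x) := by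
          rw [e1, e2, Finset.sum_mul]
          refine Finset.sum_le_sum fun i _ => ?_
          rw [Finset.sum_mul]
          refine Finset.sum_le_sum fun j _ => ?_
          rw [mul_assoc]
          refine mul_le_mul_of_nonneg_left ?_ (wt_nonneg _ _ _)
          refine (pair_bound _ _ (Vb_orth Zb hZb Y hY i) (Vb_orth Zb hZb Y hY j)
            (fun b => u (i, b))).trans ?_
          refine mul_le_mul_of_nonneg_left (e3 i) ?_
          exact Finset.sum_nonneg fun c _ => Finset.sum_nonneg fun b _ => by positivity
      _ ≤ _ := mul_le_mul_of_nonneg_right hE ht.le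
  have q4 : -∑ c, yv Y x c ⬝ᵥ (Δ *ᵥ Y.col c) ≤ d * Real.sqrt N * (x ⬝ᵥ x) := by
    have hs : 0 < Real.sqrt N / (x ⬝ᵥ x) := by positivity
    have hyoung := Finset.sum_le_sum fun c (_ : c ∈ (Finset.univ : Finset (Fin r))) =>
      opNorm_young Δ (-yv Y x c) (Y.col c) d _ hΔsmall hs
    rw [← Finset.mul_sum, ← Finset.mul_sum, Finset.sum_add_distrib, ← Finset.mul_sum,
      ← Finset.sum_div, hfr] at hyoung
    simp only [neg_dotProduct, dotProduct_neg, neg_neg, Finset.sum_neg_distrib] at hyoung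
    have h1 : d * (Real.sqrt N / (x ⬝ᵥ x) * (∑ c, yv Y x c ⬝ᵥ yv Y x c) +
        N / (Real.sqrt N / (x ⬝ᵥ x))) ≤ d * (Real.sqrt N / (x ⬝ᵥ x) * ((x ⬝ᵥ x) ^ 2) +
        N / (Real.sqrt N / (x ⬝ᵥ x))) := by gcongr
    have h2 : d * (Real.sqrt N / (x ⬝ᵥ x) * ((x ⬝ᵥ x) ^ 2) +
        N / (Real.sqrt N / (x ⬝ᵥ x))) = 2 * (d * Real.sqrt N * (x ⬝ᵥ x)) := by
      have : N / (Real.sqrt N / (x ⬝ᵥ x)) = Real.sqrt N * (x ⬝ᵥ x) := by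
        rw [div_eq_iff hs.ne']; field_simp; linarith
      rw [this]; field_simp; ring
    linarith
  have hS : x ⬝ᵥ (Smat Lhat Y *ᵥ x) = x ⬝ᵥ (LZmat (G.lapMatrix ℝ) Zb *ᵥ x) - x ⬝ᵥ (Δ *ᵥ x)
      - (∑ c, yv Y x c ⬝ᵥ (LZmat (G.lapMatrix ℝ) Zb *ᵥ Y.col c)
        - ∑ c, yv Y x c ⬝ᵥ (Δ *ᵥ Y.col c)) := by
    unfold Smat
    rw [Matrix.sub_mulVec, dotProduct_sub, SBD_yv, hLhat]
    simp only [Matrix.sub_mulVec, dotProduct_sub, Finset.sum_sub_distrib]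
  have hd1 : d ≤ d * Real.sqrt N := by nlinarith
  rw [hS]
  have f1 : d * (x ⬝ᵥ x) ≤ lam * (1 / 4) * (x ⬝ᵥ x) := by
    apply mul_le_mul_of_nonneg_right _ ht.le; linarith
  have f2 : d * Real.sqrt N * (x ⬝ᵥ x) ≤ lam * (1 / 4) * (x ⬝ᵥ x) := by
    apply mul_le_mul_of_nonneg_right _ ht.le; linarith
  have f3 := mul_pos hlam ht
  linarith

end SyncPaper
namespace SyncPaper

lemma exists_min {n r : ℕ} (M : Matrix (Fin n × Fin r) (Fin n × Fin r) ℝ)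
    (Y0 : Matrix (Fin n × Fin r) (Fin r) ℝ) (hY0 : Feasible Y0) :
    ∃ Y : Matrix (Fin n × Fin r) (Fin r) ℝ, Feasible Y ∧
      ∀ W : Matrix (Fin n × Fin r) (Fin r) ℝ, Feasible W → ip M (Y * Yᵀ) ≤ ip M (W * Wᵀ) := by
  have hcpt : IsCompact {Y : Matrix (Fin n × Fin r) (Fin r) ℝ | Feasible Y} := by
    have hK : IsCompact (Set.univ.pi fun _ : Fin n × Fin r => Set.univ.pi fun _ : Fin r =>
        Set.Icc (-1 : ℝ) 1) :=
      isCompact_univ_pi fun _ => isCompact_univ_pi fun _ => isCompact_Icc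
    refine IsCompact.of_isClosed_subset hK ?_ ?_
    · have : {Y : Matrix (Fin n × Fin r) (Fin r) ℝ | Feasible Y} =
          ⋂ i, {Y | blk Y i * (blk Y i)ᵀ = 1} := by ext Y; simp [Feasible]
      rw [this]
      refine isClosed_iInter fun i => isClosed_eq ?_ continuous_const
      have hb : Continuous fun Y : Matrix (Fin n × Fin r) (Fin r) ℝ => blk Y i := by
        refine continuous_matrix fun a b => ?_
        exact continuous_id.matrix_elem _ _
      exact hb.matrix_mul hb.matrix_transpose
    · intro Y hY q _ c _
      have h := feas_row (show Feasible Y from hY) q.1 q.2 q.2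
      rw [if_pos rfl] at h
      have h2 : Y q c * Y q c ≤ 1 := by
        rw [← h]
        exact Finset.single_le_sum (f := fun c => Y (q.1, q.2) c * Y (q.1, q.2) c)
          (fun c _ => mul_self_nonneg _) (Finset.mem_univ c)
      constructor <;> nlinarith
  have hcont : Continuous fun Y : Matrix (Fin n × Fin r) (Fin r) ℝ => ip M (Y * Yᵀ) := by
    unfold ip
    exact (continuous_const.matrix_mul
      ((continuous_id.matrix_mul continuous_id.matrix_transpose).matrix_transpose)).matrix_trace
  obtain ⟨Y, hY, hmin⟩ := hcpt.exists_isMinOn ⟨Y0, hY0⟩ hcont.continuousOn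
  exact ⟨Y, hY, fun W hW => hmin hW⟩

lemma exists_rot {r : ℕ} (K : Matrix (Fin r) (Fin r) ℝ) (hK : Kᵀ = -K) :
    ∃ E : ℝ → Matrix (Fin r) (Fin r) ℝ, (∀ t, E t * (E t)ᵀ = 1) ∧ E 0 = 1 ∧
      ∀ a b, HasDerivAt (fun t => E t a b) (K a b) 0 := by
  letI : NormedRing (Matrix (Fin r) (Fin r) ℝ) := Matrix.linftyOpNormedRing
  letI : NormedAlgebra ℝ (Matrix (Fin r) (Fin r) ℝ) := Matrix.linftyOpNormedAlgebra
  refine ⟨fun t => NormedSpace.exp (t • K), ?_, ?_, ?_⟩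
  · intro t
    have h1 : (NormedSpace.exp (t • K))ᵀ = NormedSpace.exp (-(t • K)) := by
      rw [← Matrix.exp_transpose, Matrix.transpose_smul, hK, smul_neg]
    rw [h1, ← Matrix.exp_add_of_commute _ _ (Commute.neg_right (Commute.refl (t • K))), add_neg_cancel,
      NormedSpace.exp_zero]
  · simp [NormedSpace.exp_zero]
  · intro a b
    have h := hasDerivAt_exp_smul_const (𝕂 := ℝ) K (0 : ℝ)
    rw [zero_smul, NormedSpace.exp_zero, one_mul] at h
    let l : Matrix (Fin r) (Fin r) ℝ →ₗ[ℝ] ℝ :=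
      { toFun := fun M => M a b, map_add' := fun _ _ => rfl, map_smul' := fun _ _ => rfl }
    exact (LinearMap.toContinuousLinearMap l).hasFDerivAt.comp_hasDerivAt (0 : ℝ) h

lemma first_order {n r : ℕ} (M : Matrix (Fin n × Fin r) (Fin n × Fin r) ℝ) (hM : Mᵀ = M)
    (Y : Matrix (Fin n × Fin r) (Fin r) ℝ) (hY : Feasible Y)
    (hmin : ∀ W : Matrix (Fin n × Fin r) (Fin r) ℝ, Feasible W →
      ip M (Y * Yᵀ) ≤ ip M (W * Wᵀ)) :
    ∀ i a b, (M * Y * Yᵀ) (i, a) (i, b) = (M * Y * Yᵀ) (i, b) (i, a) := by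
  set T := M * Y * Yᵀ with hT
  let K : Fin n → Matrix (Fin r) (Fin r) ℝ := fun i =>
    Matrix.of fun a b => T (i, a) (i, b) - T (i, b) (i, a)
  have hK : ∀ i, (K i)ᵀ = -K i := by
    intro i; ext a b; simp [K]
  choose E hE1 hE2 hE3 using fun i => exists_rot (K i) (hK i)
  let W : ℝ → Matrix (Fin n × Fin r) (Fin r) ℝ := fun t =>
    Matrix.of fun q c => (E q.1 t * blk Y q.1) q.2 c
  let W' : Matrix (Fin n × Fin r) (Fin r) ℝ := Matrix.of fun q c => (K q.1 * blk Y q.1) q.2 c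
  have hWblk : ∀ t i, blk (W t) i = E i t * blk Y i := fun t i => by ext a b; rfl
  have hWf : ∀ t, Feasible (W t) := by
    intro t i
    rw [hWblk, Matrix.transpose_mul, Matrix.mul_assoc, ← Matrix.mul_assoc (blk Y i), hY i,
      Matrix.one_mul, hE1]
  have hW0 : W 0 = Y := by
    ext ⟨i, a⟩ c
    simp [W, hE2, blk]
  have hWd : ∀ q c, HasDerivAt (fun t => W t q c) (W' q c) 0 := by
    intro q c
    simp only [W, W', Matrix.of_apply, Matrix.mul_apply]
    exact HasDerivAt.fun_sum fun b _ => (hE3 q.1 q.2 b).mul_const _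
  have hg : HasDerivAt (fun t => ip M (W t * (W t)ᵀ))
      (∑ c, ∑ q, (W' q c * ∑ q', M q q' * Y q' c + Y q c * ∑ q', M q q' * W' q' c)) 0 := by
    simp only [ip_mul_transpose, dotProduct, Matrix.mulVec, Matrix.col_apply]
    refine HasDerivAt.fun_sum fun c _ => HasDerivAt.fun_sum fun q _ => ?_
    have h1 := hWd q c
    have h2 : HasDerivAt (fun t => ∑ q', M q q' * W t q' c) (∑ q', M q q' * W' q' c) 0 :=
      HasDerivAt.fun_sum fun q' _ => (hWd q' c).const_mul _
    have h3 := h1.mul h2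
    simp only [hW0] at h3
    exact h3
  have hloc : IsLocalMin (fun t => ip M (W t * (W t)ᵀ)) 0 := by
    refine Filter.Eventually.of_forall fun t => ?_
    simp only [hW0]
    exact hmin _ (hWf t)
  have hz := hloc.hasDerivAt_eq_zero hg
  have hsym : ∑ c, ∑ q, Y q c * ∑ q', M q q' * W' q' c = ∑ c, ∑ q, W' q c * ∑ q', M q q' * Y q' c := by
    refine Finset.sum_congr rfl fun c _ => ?_
    simp only [Finset.mul_sum]
    rw [Finset.sum_comm]
    refine Finset.sum_congr rfl fun q _ => Finset.sum_congr rfl fun q' _ => ?_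
    have : M q' q = M q q' := congrFun (congrFun hM q) q'
    rw [this]; ring
  simp only [Finset.sum_add_distrib] at hz
  rw [hsym] at hz
  have hz2 : ∑ c, ∑ q, W' q c * ∑ q', M q q' * Y q' c = 0 := by linarith
  have e1 : ∑ c, ∑ q, W' q c * ∑ q', M q q' * Y q' c =
      ∑ i, ∑ a, ∑ b, K i a b * T (i, a) (i, b) := by
    rw [Finset.sum_comm, Fintype.sum_prod_type]
    refine Finset.sum_congr rfl fun i _ => Finset.sum_congr rfl fun a _ => ?_
    have hTe : ∀ b, T (i, a) (i, b) = ∑ c, (∑ q', M (i, a) q' * Y q' c) * Y (i, b) c := by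
      intro b; rw [hT, Matrix.mul_apply]; rfl
    simp only [hTe, W', Matrix.of_apply, Matrix.mul_apply, blk]
    simp only [Finset.sum_mul _ _ (∑ q', M (i, a) q' * Y q' _)]
    rw [Finset.sum_comm]
    refine Finset.sum_congr rfl fun b _ => ?_
    rw [Finset.mul_sum]
    exact Finset.sum_congr rfl fun c _ => by ring
  have e2 : ∑ i, ∑ a, ∑ b, K i a b * T (i, a) (i, b) = ∑ i, ∑ a, ∑ b, K i a b ^ 2 / 2 := by
    refine Finset.sum_congr rfl fun i _ => ?_
    have s1 : ∑ a, ∑ b, K i a b * T (i, a) (i, b) = ∑ a, ∑ b, - (K i a b * T (i, b) (i, a)) := by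
      rw [Finset.sum_comm]
      refine Finset.sum_congr rfl fun a _ => Finset.sum_congr rfl fun b _ => ?_
      simp only [K, Matrix.of_apply]; ring
    have s2 : ∑ a, ∑ b, K i a b ^ 2 / 2 = (∑ a, ∑ b, K i a b * T (i, a) (i, b) +
        ∑ a, ∑ b, - (K i a b * T (i, b) (i, a))) / 2 := by
      rw [← Finset.sum_add_distrib, Finset.sum_div]
      refine Finset.sum_congr rfl fun a _ => ?_
      rw [← Finset.sum_add_distrib, Finset.sum_div]
      refine Finset.sum_congr rfl fun b _ => ?_
      simp only [K, Matrix.of_apply]; ring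
    rw [s2, ← s1]; ring
  rw [e1, e2] at hz2
  intro i a b
  have n1 : ∀ i a, 0 ≤ ∑ b, K i a b ^ 2 / 2 := fun i a => Finset.sum_nonneg fun b _ => by positivity
  have n2 : ∀ i, 0 ≤ ∑ a, ∑ b, K i a b ^ 2 / 2 := fun i => Finset.sum_nonneg fun a _ => n1 i a
  have z1 := (Finset.sum_eq_zero_iff_of_nonneg fun i _ => n2 i).1 hz2 i (Finset.mem_univ i)
  have z2 := (Finset.sum_eq_zero_iff_of_nonneg fun a _ => n1 i a).1 z1 a (Finset.mem_univ a)
  have z3 := (Finset.sum_eq_zero_iff_of_nonneg fun b _ => by positivity).1 z2 b (Finset.mem_univ b)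
  have z4 : K i a b = 0 := by
    have : K i a b ^ 2 = 0 := by linarith
    exact pow_eq_zero_iff (two_ne_zero) |>.1 this
  simp only [K, Matrix.of_apply] at z4
  linarith

lemma Smat_mul {n r : ℕ} (M : Matrix (Fin n × Fin r) (Fin n × Fin r) ℝ) 
    (Y : Matrix (Fin n × Fin r) (Fin r) ℝ) (hY : Feasible Y)
    (hsym : ∀ i a b, (M * Y * Yᵀ) (i, a) (i, b) = (M * Y * Yᵀ) (i, b) (i, a)) :
    Smat M Y * Y = 0 := by
  unfold Smat
  rw [Matrix.sub_mul, sub_eq_zero]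
  ext ⟨i, a⟩ c
  have hcol : ∀ d c, ∑ b, Y (i, b) d * Y (i, b) c = if d = c then 1 else 0 := by
    intro d c
    have h0 : (blk Y i)ᵀ * blk Y i = 1 := mul_eq_one_comm.1 (hY i)
    have := congrFun (congrFun h0 d) c
    simpa [Matrix.mul_apply, blk, Matrix.one_apply] using this
  have h1 : ∀ b, (M * Y * Yᵀ) (i, a) (i, b) = ∑ d, (M * Y) (i, a) d * Y (i, b) d := by
    intro b; rw [Matrix.mul_apply]; rfl
  have h2 : ((SBD (M * Y * Yᵀ)) * Y) (i, a) c = ∑ b, (M * Y * Yᵀ) (i, a) (i, b) * Y (i, b) c := by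
    rw [Matrix.mul_apply, Fintype.sum_prod_type]
    simp only [SBD, Matrix.of_apply, ite_mul, zero_mul]
    rw [Finset.sum_eq_single i]
    · simp only [if_true]
      refine Finset.sum_congr rfl fun b _ => ?_
      rw [hsym i b a]; ring
    · intro j _ hj
      exact Finset.sum_eq_zero fun b _ => if_neg hj.symm
    · simp
  rw [h2]
  simp only [h1, Finset.sum_mul]
  rw [Finset.sum_comm]
  simp only [mul_assoc, ← Finset.mul_sum, hcol]
  simp

end SyncPaper
namespace SyncPaper

open scoped MatrixOrder in
lemma gram_of_posSemidef {m : Type*} [Fintype m] [DecidableEq m] (X : Matrix m m ℝ)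
    (hX : X.PosSemidef) : ∃ B : Matrix m m ℝ, X = Bᵀ * B := by
  obtain ⟨B, hB⟩ := CStarAlgebra.nonneg_iff_eq_star_mul_self.mp hX.nonneg
  refine ⟨B, ?_⟩
  rw [hB, Matrix.star_eq_conjTranspose, Matrix.conjTranspose_eq_transpose_of_trivial]

end SyncPaper

namespace SyncPaper

lemma sdp_blk {n r : ℕ} {X : Matrix (Fin n × Fin r) (Fin n × Fin r) ℝ} (hX : SDPFeasible X)
    (i : Fin n) (a b : Fin r) : X (i, a) (i, b) = if a = b then 1 else 0 := by
  have h1 := congrFun (congrFun hX.2 (i, a)) (i, b)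
  have h2 : X (i, b) (i, a) = X (i, a) (i, b) := by
    have := hX.1.isHermitian.apply (i, a) (i, b)
    simpa using this
  simp only [SBD, Matrix.of_apply, if_true, h2, Matrix.one_apply, Prod.mk.injEq, true_and] at h1
  rw [← h1]; ring

lemma sdp_trace {n r : ℕ} {X : Matrix (Fin n × Fin r) (Fin n × Fin r) ℝ} (hX : SDPFeasible X)
    (T : Matrix (Fin n × Fin r) (Fin n × Fin r) ℝ) : (SBD T * X).trace = (SBD T).trace := by
  simp only [Matrix.trace, Matrix.diag, Matrix.mul_apply]
  refine Finset.sum_congr rfl fun q _ => ?_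
  obtain ⟨i, a⟩ := q
  rw [Fintype.sum_prod_type, Finset.sum_eq_single i]
  · simp [sdp_blk hX]
  · intro j _ hj
    exact Finset.sum_eq_zero fun b _ => by simp [SBD, hj.symm]
  · simp

lemma sdp_ip {n r p : ℕ} {X : Matrix (Fin n × Fin r) (Fin n × Fin r) ℝ} (hX : SDPFeasible X)
    (L : Matrix (Fin n × Fin r) (Fin n × Fin r) ℝ) (Y : Matrix (Fin n × Fin r) (Fin p) ℝ) :
    ip L X = (Smat L Y * X).trace + (SBD (L * Y * Yᵀ)).trace := by
  have hs : Xᵀ = X := by simpa using hX.1.isHermitian.eq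
  unfold ip Smat
  rw [hs, Matrix.sub_mul, Matrix.trace_sub, sdp_trace hX]
  ring

lemma sdp_of_feas {n r : ℕ} {W : Matrix (Fin n × Fin r) (Fin r) ℝ} (hW : Feasible W) :
    SDPFeasible (W * Wᵀ) := by
  refine ⟨by simpa using Matrix.posSemidef_self_mul_conjTranspose W, ?_⟩
  ext ⟨i, a⟩ ⟨j, b⟩
  by_cases hij : i = j
  · subst hij
    have h := feas_row hW i
    simp only [SBD, Matrix.of_apply, if_true, Matrix.mul_apply, Matrix.transpose_apply, h,
      Matrix.one_apply, Prod.mk.injEq, true_and, eq_comm (a := b)]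
    ring
  · simp [SBD, hij, Matrix.one_apply]

lemma trace_mul_gram {m k : Type*} [Fintype m] [Fintype k] (S : Matrix m m ℝ)
    (B : Matrix k m ℝ) : (S * (Bᵀ * B)).trace = ∑ l, B l ⬝ᵥ (S *ᵥ B l) := by
  rw [← Matrix.mul_assoc, Matrix.trace_mul_comm]
  simp only [Matrix.trace, Matrix.diag, Matrix.mul_apply, dotProduct, Matrix.mulVec,
    Matrix.transpose_apply]

/-- **Corollary 1.7 (SDP exactness).**  Suppose `G` is connected and
`‖Δ‖ < λ₂/(2√5 √(rn))`.  Then the SDP relaxation has a unique optimal solution `X̂` of rank `r`;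
the unrelaxed problem has a solution `Ẑ`, unique up to right-multiplication by an element of
`O(r)`; and `X̂ = Ẑ Ẑᵀ`. -/
theorem sdp_exactness
    (n r : ℕ) (hn : 1 ≤ n) (hr : 1 ≤ r)
    (G : SimpleGraph (Fin n)) [DecidableRel G.Adj] (hG : G.Connected)
    (Zb : Fin n → Matrix (Fin r) (Fin r) ℝ) (hZb : ∀ i, Zb i * (Zb i)ᵀ = 1)
    (Δ : Matrix (Fin n × Fin r) (Fin n × Fin r) ℝ) (hΔsym : Δᵀ = Δ)
    (hΔsupp : ∀ q q' : Fin n × Fin r, ¬ G.Adj q.1 q'.1 → Δ q q' = 0)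
    (Lhat : Matrix (Fin n × Fin r) (Fin n × Fin r) ℝ)
    (hLhat : Lhat = LZmat (G.lapMatrix ℝ) Zb - Δ)
    (hΔsmall : opNorm Δ < lam2 (G.lapMatrix ℝ) / (2 * Real.sqrt 5 * Real.sqrt (r * n))) :
    ∃ (Xhat : Matrix (Fin n × Fin r) (Fin n × Fin r) ℝ)
      (Zhat : Matrix (Fin n × Fin r) (Fin r) ℝ),
      -- (i) `X̂` is the unique optimal solution of the SDP relaxation, of rank `r`
      SDPFeasible Xhat ∧
      (∀ X : Matrix (Fin n × Fin r) (Fin n × Fin r) ℝ, SDPFeasible X →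
        ip Lhat Xhat ≤ ip Lhat X) ∧
      (∀ X : Matrix (Fin n × Fin r) (Fin n × Fin r) ℝ, SDPFeasible X →
        (∀ X' : Matrix (Fin n × Fin r) (Fin n × Fin r) ℝ, SDPFeasible X' →
          ip Lhat X ≤ ip Lhat X') → X = Xhat) ∧
      Xhat.rank = r ∧
      -- (ii) `Ẑ` solves the unrelaxed problem, uniquely up to right `O(r)`-multiplication
      Feasible Zhat ∧
      (∀ W : Matrix (Fin n × Fin r) (Fin r) ℝ, Feasible W →
        ip Lhat (Zhat * Zhatᵀ) ≤ ip Lhat (W * Wᵀ)) ∧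
      (∀ W : Matrix (Fin n × Fin r) (Fin r) ℝ, Feasible W →
        (∀ W' : Matrix (Fin n × Fin r) (Fin r) ℝ, Feasible W' →
          ip Lhat (W * Wᵀ) ≤ ip Lhat (W' * W'ᵀ)) →
        ∃ Q : Matrix (Fin r) (Fin r) ℝ, Q * Qᵀ = 1 ∧ W = Zhat * Q) ∧
      -- (iii)
      Xhat = Zhat * Zhatᵀ := by
  have hN : (0:ℝ) < r * n := by positivity
  have h0 : 0 ≤ opNorm Δ := norm_nonneg _
  have hden : 0 < 2 * Real.sqrt 5 * Real.sqrt (r * n) := by positivity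
  have hlam : 0 < lam2 (G.lapMatrix ℝ) := by
    have := h0.trans_lt hΔsmall
    exact (div_pos_iff_of_pos_right hden).1 this
  have hLsym : Lhatᵀ = Lhat := by
    rw [hLhat, Matrix.transpose_sub, hΔsym]
    congr 1
    unfold LZmat
    rw [Matrix.transpose_mul, Matrix.transpose_mul, Matrix.transpose_transpose,
      ← Matrix.kroneckerMap_transpose, (G.isSymm_lapMatrix (R := ℝ)).eq, Matrix.transpose_one,
      Matrix.mul_assoc]
  have hZf : Feasible (Zstack Zb) := fun i => hZb i
  obtain ⟨Y, hY, hmin⟩ := exists_min Lhat (Zstack Zb) hZf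
  have hE := energy_bound hn hr G Zb hZb Δ hΔsym Lhat hLhat hlam hΔsmall.le Y hY hmin
  have hSY : Smat Lhat Y * Y = 0 := Smat_mul Lhat Y hY (first_order Lhat hLsym Y hY hmin)
  have hpos := S_pos hn hr G Zb hZb Δ Lhat hLhat hlam hΔsmall.le Y hY hE
  set S := Smat Lhat Y with hS
  have hSsym : Sᵀ = S := by
    rw [hS, Smat, Matrix.transpose_sub, hLsym]
    congr 1
    ext q q'
    simp only [SBD, Matrix.transpose_apply, Matrix.of_apply, eq_comm (a := q'.1), add_comm]
  let i0 : Fin n := ⟨0, hn⟩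
  -- the pairing of the ground truth with a vector
  let P : Matrix (Fin r) (Fin n × Fin r) ℝ := Matrix.of fun b q => Zb q.1 q.2 b
  have hP : ∀ x b, (P *ᵥ x) b = ∑ i, ((Dmat Zb)ᵀ *ᵥ x) (i, b) := by
    intro x b
    simp only [Dmat_transpose_mulVec]
    simp [P, Matrix.mulVec, dotProduct, Fintype.sum_prod_type]
  have hpos' : ∀ x, P *ᵥ x = 0 → x ≠ 0 → 0 < x ⬝ᵥ (S *ᵥ x) := by
    intro x hx hx0
    exact hpos x hx0 fun b => by rw [← hP, hx]; rfl
  have hSYv : ∀ a, S *ᵥ (Y *ᵥ a) = 0 := by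
    intro a; rw [Matrix.mulVec_mulVec, hSY, Matrix.zero_mulVec]
  have hYYn : Yᵀ * Y = (n : ℝ) • 1 := by
    ext c d
    have : ∀ i, ∑ a, Y (i, a) c * Y (i, a) d = (1 : Matrix (Fin r) (Fin r) ℝ) c d := by
      intro i
      have h0 : (blk Y i)ᵀ * blk Y i = 1 := mul_eq_one_comm.1 (hY i)
      rw [← h0]; rfl
    rw [Matrix.mul_apply, Fintype.sum_prod_type]
    simp [this]
  have hn0 : (n : ℝ) ≠ 0 := by positivity
  have hYinj : ∀ a, Y *ᵥ a = 0 → a = 0 := by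
    intro a ha
    have : Yᵀ *ᵥ (Y *ᵥ a) = 0 := by rw [ha, Matrix.mulVec_zero]
    rw [Matrix.mulVec_mulVec, hYYn, Matrix.smul_mulVec, Matrix.one_mulVec] at this
    exact (smul_eq_zero.1 this).resolve_left hn0
  have hdet : IsUnit (P * Y) := by
    rw [← Matrix.mulVec_injective_iff_isUnit]
    intro a b hab
    have h1 : P *ᵥ (Y *ᵥ (a - b)) = 0 := by
      rw [Matrix.mulVec_mulVec, Matrix.mulVec_sub, sub_eq_zero]; exact hab
    by_contra hne
    have h2 : Y *ᵥ (a - b) ≠ 0 := fun h => hne (sub_eq_zero.1 (hYinj _ h))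
    have := hpos' _ h1 h2
    rw [hSYv, dotProduct_zero] at this
    exact lt_irrefl _ this
  have hdec : ∀ x : Fin n × Fin r → ℝ, ∃ a, P *ᵥ (x - Y *ᵥ a) = 0 := by
    intro x
    refine ⟨(P * Y)⁻¹ *ᵥ (P *ᵥ x), ?_⟩
    rw [Matrix.mulVec_sub, Matrix.mulVec_mulVec, Matrix.mulVec_mulVec,
      Matrix.mul_nonsing_inv _ ((Matrix.isUnit_iff_isUnit_det _).1 hdet), Matrix.one_mulVec,
      sub_self]
  have hquad : ∀ (x : Fin n × Fin r → ℝ) a, x ⬝ᵥ (S *ᵥ x) =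
      (x - Y *ᵥ a) ⬝ᵥ (S *ᵥ (x - Y *ᵥ a)) := by
    intro x a
    rw [Matrix.mulVec_sub, hSYv, sub_zero, sub_dotProduct, Matrix.dotProduct_mulVec (Y *ᵥ a),
      ← Matrix.mulVec_transpose, hSsym, hSYv, zero_dotProduct, sub_zero]
  have hSnn : ∀ x, 0 ≤ x ⬝ᵥ (S *ᵥ x) := by
    intro x
    obtain ⟨a, ha⟩ := hdec x
    rw [hquad x a]
    by_cases h : x - Y *ᵥ a = 0
    · rw [h, zero_dotProduct]
    · exact (hpos' _ ha h).le
  have hSz : ∀ x, x ⬝ᵥ (S *ᵥ x) = 0 → ∃ a, x = Y *ᵥ a := by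
    intro x hx
    obtain ⟨a, ha⟩ := hdec x
    refine ⟨a, ?_⟩
    by_contra hne
    have := hpos' _ ha (sub_ne_zero.2 hne)
    rw [← hquad x a, hx] at this
    exact lt_irrefl _ this
  have hXf := sdp_of_feas hY
  have hipX : ip Lhat (Y * Yᵀ) = (SBD (Lhat * Y * Yᵀ)).trace := by
    rw [sdp_ip hXf Lhat Y, ← hS, ← Matrix.mul_assoc, hSY, Matrix.zero_mul, Matrix.trace_zero,
      zero_add]
  have hgram : ∀ X : Matrix (Fin n × Fin r) (Fin n × Fin r) ℝ, X.PosSemidef →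
      ∃ B : Matrix (Fin n × Fin r) (Fin n × Fin r) ℝ, X = Bᵀ * B := by
    intro X hX
    exact gram_of_posSemidef X hX
  have hopt : ∀ X : Matrix (Fin n × Fin r) (Fin n × Fin r) ℝ, SDPFeasible X →
        ip Lhat (Y * Yᵀ) ≤ ip Lhat X := by
    intro X hX
    obtain ⟨B, hB⟩ := hgram X hX.1
    rw [hipX, sdp_ip hX Lhat Y, ← hS, hB, trace_mul_gram]
    have := Finset.sum_nonneg fun l (_ : l ∈ Finset.univ) => hSnn (B l)
    linarith
  have huniq : ∀ X : Matrix (Fin n × Fin r) (Fin n × Fin r) ℝ, SDPFeasible X →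
        ip Lhat X ≤ ip Lhat (Y * Yᵀ) → X = Y * Yᵀ := by
    intro X hX hle
    obtain ⟨B, hB⟩ := hgram X hX.1
    rw [hipX, sdp_ip hX Lhat Y, ← hS, hB, trace_mul_gram] at hle
    have hnn := Finset.sum_nonneg fun l (_ : l ∈ Finset.univ) => hSnn (B l)
    have hz : ∑ l, B l ⬝ᵥ (S *ᵥ B l) = 0 := by linarith
    have hz' := fun l => (Finset.sum_eq_zero_iff_of_nonneg fun l _ => hSnn (B l)).1 hz l
      (Finset.mem_univ l)
    choose a ha using fun l => hSz (B l) (hz' l)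
    let C : Matrix (Fin r) (Fin n × Fin r) ℝ := Matrix.of fun b l => a l b
    have hBC : Bᵀ = Y * C := by
      ext q l
      rw [Matrix.transpose_apply, ha l]
      rfl
    have hXC : X = Y * (C * Cᵀ) * Yᵀ := by
      have : B = Cᵀ * Yᵀ := by rw [← Matrix.transpose_mul, ← hBC, Matrix.transpose_transpose]
      rw [hB, hBC, this]
      simp only [Matrix.mul_assoc]
    have hblk : blk Y i0 * (C * Cᵀ) * (blk Y i0)ᵀ = 1 := by
      ext p q
      have h1 := sdp_blk hX i0 p q
      rw [hXC] at h1
      rw [Matrix.one_apply, ← h1]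
      rfl
    have hCC : C * Cᵀ = 1 := by
      have h0 : (blk Y i0)ᵀ * blk Y i0 = 1 := mul_eq_one_comm.1 (hY i0)
      calc C * Cᵀ = ((blk Y i0)ᵀ * blk Y i0) * (C * Cᵀ) * ((blk Y i0)ᵀ * blk Y i0) := by
            rw [h0, Matrix.one_mul, Matrix.mul_one]
        _ = (blk Y i0)ᵀ * (blk Y i0 * (C * Cᵀ) * (blk Y i0)ᵀ) * blk Y i0 := by
            simp only [Matrix.mul_assoc]
        _ = 1 := by rw [hblk, Matrix.mul_one, h0]
    rw [hXC, hCC, Matrix.mul_one]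
  refine ⟨Y * Yᵀ, Y, hXf, hopt, fun X hX hXmin => huniq X hX (hXmin _ hXf), ?_, hY, hmin, ?_, rfl⟩
  · rw [Matrix.rank_self_mul_transpose, ← Matrix.rank_transpose_mul_self, hYYn]
    rw [Matrix.rank_of_isUnit, Fintype.card_fin]
    exact (isUnit_one.smul (Units.mk0 (n : ℝ) hn0))
  · intro W hW hWmin
    have hWW := huniq (W * Wᵀ) (sdp_of_feas hW) (hWmin Y hY)
    have h0 : (blk W i0)ᵀ * blk W i0 = 1 := mul_eq_one_comm.1 (hW i0)
    have h0Y : (blk Y i0)ᵀ * blk Y i0 = 1 := mul_eq_one_comm.1 (hY i0)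
    refine ⟨(blk Y i0)ᵀ * blk W i0, ?_, ?_⟩
    · rw [Matrix.transpose_mul, Matrix.transpose_transpose, Matrix.mul_assoc,
        ← Matrix.mul_assoc (blk W i0), hW i0, Matrix.one_mul, h0Y]
    · have hcol : W * (blk W i0)ᵀ = Y * (blk Y i0)ᵀ := by
        ext q b
        exact congrFun (congrFun hWW q) (i0, b)
      rw [← Matrix.mul_assoc, ← hcol, Matrix.mul_assoc, h0, Matrix.mul_one]

end SyncPaper
end

section
/- (Key second-order inequality, noiseless case.) Suppose the cost matrix is L̂ = L ⊗ I_r (i.e., Δ = 0 and all Z_i = I_r). Then every second-order critical point Y of the rank-p problem min{⟨L̂, Y Yᵀ⟩ : Y feasible} satisfies (p − r − 2) Σ_{i,j=1}^n L_ij tr(Y_i Y_jᵀ) + (1/4) Σ_{i,j=1}^n A_ij ‖Y_i − Y_j‖_F⁴ ≤ 0, where ‖·‖_F is the Frobenius norm. -/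
open Matrix MeasureTheory ProbabilityTheory
open scoped Kronecker BigOperators

namespace SyncPaper

lemma lap_sum {n : ℕ} (G : SimpleGraph (Fin n)) [DecidableRel G.Adj] (f : Fin n → Fin n → ℝ) :
    ∑ i, ∑ j, G.lapMatrix ℝ i j * f i j = ∑ i, ∑ j, G.adjMatrix ℝ i j * (f i i - f i j) := by
  refine Finset.sum_congr rfl fun i _ => ?_
  have h : (G.degree i : ℝ) = ∑ j, G.adjMatrix ℝ i j := by
    simp [SimpleGraph.adjMatrix_apply, SimpleGraph.degree, SimpleGraph.neighborFinset_eq_filter]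
  simp only [SimpleGraph.lapMatrix, SimpleGraph.degMatrix, Matrix.sub_apply, sub_mul, mul_sub,
    Finset.sum_sub_distrib, Matrix.diagonal_apply, ite_mul, zero_mul, Finset.sum_ite_eq,
    Finset.mem_univ, if_true]
  rw [h, Finset.sum_mul]

/-- trace of `Y_i Y_jᵀ` -/
def tt {n r p : ℕ} (Y : Matrix (Fin n × Fin r) (Fin p) ℝ) (i j : Fin n) : ℝ :=
  ∑ a, ∑ d, Y (i, a) d * Y (j, a) d

lemma tt_eq {n r p : ℕ} (Y : Matrix (Fin n × Fin r) (Fin p) ℝ) (i j : Fin n) :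
    (blk Y i * (blk Y j)ᵀ).trace = tt Y i j := by
  simp [Matrix.trace, Matrix.mul_apply, blk, tt]

lemma feas_apply {n r p : ℕ} {Y : Matrix (Fin n × Fin r) (Fin p) ℝ} (h : Feasible Y)
    (i : Fin n) (a b : Fin r) : ∑ d, Y (i, a) d * Y (i, b) d = if a = b then 1 else 0 := by
  have := congrFun (congrFun (h i) a) b
  simpa [Matrix.mul_apply, blk, Matrix.one_apply] using this

lemma tt_self {n r p : ℕ} {Y : Matrix (Fin n × Fin r) (Fin p) ℝ} (h : Feasible Y)
    (i : Fin n) : tt Y i i = r := by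
  simp [tt, feas_apply h]

lemma tt_comm {n r p : ℕ} (Y : Matrix (Fin n × Fin r) (Fin p) ℝ)
    (i j : Fin n) : tt Y i j = tt Y j i := by
  simp [tt, mul_comm]

lemma frob_eq {n r p : ℕ} {Y : Matrix (Fin n × Fin r) (Fin p) ℝ} (h : Feasible Y)
    (i j : Fin n) : frobSq (blk Y i - blk Y j) = 2 * r - 2 * tt Y i j := by
  have e : frobSq (blk Y i - blk Y j) = tt Y i i + tt Y j j - 2 * tt Y i j := by
    simp only [frobSq, tt, blk, Matrix.sub_apply, Matrix.of_apply, Finset.mul_sum,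
      ← Finset.sum_add_distrib, ← Finset.sum_sub_distrib]
    refine Finset.sum_congr rfl fun a _ => Finset.sum_congr rfl fun d _ => by ring
  rw [e, tt_self h, tt_self h]; ring

/-- the direction `Γ - Y_i Γᵀ Y_i` for `Γ = E_ab` -/
def dir {n r p : ℕ} (Y : Matrix (Fin n × Fin r) (Fin p) ℝ) (a : Fin r) (b : Fin p) :
    Matrix (Fin n × Fin r) (Fin p) ℝ :=
  Matrix.of fun q d => (if q.2 = a then (if b = d then 1 else 0) else 0) - Y q b * Y (q.1, a) d

lemma dir_tangent {n r p : ℕ} {Y : Matrix (Fin n × Fin r) (Fin p) ℝ} (h : Feasible Y)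
    (a : Fin r) (b : Fin p) (i : Fin n) :
    blk (dir Y a b) i * (blk Y i)ᵀ + blk Y i * (blk (dir Y a b) i)ᵀ = 0 := by
  have key : ∀ c c' : Fin r, ∑ d, dir Y a b (i, c) d * Y (i, c') d
      = (if c = a then Y (i, c') b else 0) - (if c' = a then Y (i, c) b else 0) := by
    intro c c'
    simp only [dir, Matrix.of_apply, sub_mul, Finset.sum_sub_distrib, mul_assoc,
      ← Finset.mul_sum, feas_apply h]
    congr 1
    · split_ifs <;> simp
    · by_cases hc : c' = a
      · simp [hc]
      · simp [hc, Ne.symm hc]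
  ext c c'
  simp only [Matrix.add_apply, Matrix.mul_apply, Matrix.transpose_apply, blk, Matrix.of_apply,
    Matrix.zero_apply]
  rw [key, Finset.sum_congr rfl (fun d _ => mul_comm (Y (i, c) d) _), key]
  ring

lemma dir_gram {n r p : ℕ} {Y : Matrix (Fin n × Fin r) (Fin p) ℝ} (h : Feasible Y)
    (i j : Fin n) (c c' : Fin r) :
    ∑ a, ∑ b, ∑ d, dir Y a b (i, c) d * dir Y a b (j, c') d
      = ((p : ℝ) - 2) * (if c = c' then 1 else 0)
        + (∑ b, Y (i, c) b * Y (j, c') b) * tt Y i j := by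
  have e1 : ∑ a : Fin r, ∑ b : Fin p, ∑ d : Fin p,
      (if c = a then (if b = d then (1:ℝ) else 0) else 0) *
      (if c' = a then (if b = d then 1 else 0) else 0) = p * (if c = c' then 1 else 0) := by
    rw [Finset.sum_eq_single c]
    · by_cases hc : c = c'
      · simp [hc]
      · simp [hc, Ne.symm hc]
    · intro x _ hx; simp [Ne.symm hx]
    · simp
  have e2 : ∀ (j : Fin n) (c c' : Fin r), ∑ a : Fin r, ∑ b : Fin p, ∑ d : Fin p,
      (if c = a then (if b = d then (1:ℝ) else 0) else 0) * (Y (j, c') b * Y (j, a) d)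
        = (if c = c' then 1 else 0) := by
    intro j c c'
    rw [Finset.sum_eq_single c]
    · rw [← feas_apply h j c c']; simp [mul_comm]
    · intro x _ hx; simp [Ne.symm hx]
    · simp
  have e3 : ∑ a : Fin r, ∑ b : Fin p, ∑ d : Fin p,
      (Y (i, c) b * Y (i, a) d) * (Y (j, c') b * Y (j, a) d)
        = (∑ b, Y (i, c) b * Y (j, c') b) * tt Y i j := by
    rw [tt, Finset.mul_sum]
    refine Finset.sum_congr rfl fun a _ => ?_
    rw [Finset.sum_mul_sum]
    refine Finset.sum_congr rfl fun b _ => Finset.sum_congr rfl fun d _ => by ring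
  have e4 : ∑ a, ∑ b, ∑ d, dir Y a b (i, c) d * dir Y a b (j, c') d
      = (∑ a : Fin r, ∑ b : Fin p, ∑ d : Fin p,
      (if c = a then (if b = d then (1:ℝ) else 0) else 0) *
      (if c' = a then (if b = d then 1 else 0) else 0))
      - (∑ a : Fin r, ∑ b : Fin p, ∑ d : Fin p,
      (if c = a then (if b = d then (1:ℝ) else 0) else 0) * (Y (j, c') b * Y (j, a) d))
      - (∑ a : Fin r, ∑ b : Fin p, ∑ d : Fin p,
      (if c' = a then (if b = d then (1:ℝ) else 0) else 0) * (Y (i, c) b * Y (i, a) d))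
      + ∑ a : Fin r, ∑ b : Fin p, ∑ d : Fin p,
      (Y (i, c) b * Y (i, a) d) * (Y (j, c') b * Y (j, a) d) := by
    simp only [← Finset.sum_add_distrib, ← Finset.sum_sub_distrib]
    refine Finset.sum_congr rfl fun a _ => Finset.sum_congr rfl fun b _ =>
      Finset.sum_congr rfl fun d _ => ?_
    simp only [dir, Matrix.of_apply]
    ring
  rw [e4, e1, e2, e2, e3]
  simp only [eq_comm (a := c') (b := c)]
  ring

lemma trace_gram {n r p : ℕ} (S : Matrix (Fin n × Fin r) (Fin n × Fin r) ℝ)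
    {Y : Matrix (Fin n × Fin r) (Fin p) ℝ} (h : Feasible Y) :
    ∑ a, ∑ b, (S * dir Y a b * (dir Y a b)ᵀ).trace
      = ∑ i, ∑ c, ∑ j, ∑ c', S (i, c) (j, c') *
        (((p : ℝ) - 2) * (if c = c' then 1 else 0)
        + (∑ b, Y (i, c) b * Y (j, c') b) * tt Y i j) := by
  have e : ∀ a b, (S * dir Y a b * (dir Y a b)ᵀ).trace
      = ∑ q, ∑ q', S q q' * ∑ d, dir Y a b q d * dir Y a b q' d := by
    intro a b
    rw [Matrix.mul_assoc]
    simp only [Matrix.trace, Matrix.diag_apply, Matrix.mul_apply, Matrix.transpose_apply]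
    refine Finset.sum_congr rfl fun q _ => Finset.sum_congr rfl fun q' _ => ?_
    simp only [mul_comm]
  simp only [e]
  have e' : ∀ q q', ∑ a, ∑ b, S q q' * ∑ d, dir Y a b q d * dir Y a b q' d =
      S q q' * ∑ a, ∑ b, ∑ d, dir Y a b q d * dir Y a b q' d := by
    intro q q'; simp only [Finset.mul_sum]
  calc _ = ∑ a, ∑ q, ∑ b, ∑ q', S q q' * ∑ d, dir Y a b q d * dir Y a b q' d :=
        Finset.sum_congr rfl fun a _ => Finset.sum_comm
    _ = ∑ q, ∑ a, ∑ b, ∑ q', S q q' * ∑ d, dir Y a b q d * dir Y a b q' d := Finset.sum_comm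
    _ = ∑ q, ∑ a, ∑ q', ∑ b, S q q' * ∑ d, dir Y a b q d * dir Y a b q' d :=
        Finset.sum_congr rfl fun q _ => Finset.sum_congr rfl fun a _ => Finset.sum_comm
    _ = ∑ q, ∑ q', ∑ a, ∑ b, S q q' * ∑ d, dir Y a b q d * dir Y a b q' d :=
        Finset.sum_congr rfl fun q _ => Finset.sum_comm
    _ = _ := by
        simp only [e', Fintype.sum_prod_type, dir_gram h]

lemma key_ineq {n r p : ℕ} (L : Matrix (Fin n) (Fin n) ℝ)
    {Y : Matrix (Fin n × Fin r) (Fin p) ℝ}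
    (hY : IsSecondOrderCritical (L ⊗ₖ (1 : Matrix (Fin r) (Fin r) ℝ)) Y) :
    0 ≤ ∑ i, ∑ j, L i j * (((p : ℝ) - 2) * r + tt Y i j ^ 2)
      - ((p : ℝ) - 2 + r) * ∑ i, ∑ j, L i j * tt Y i j := by
  obtain ⟨h, -, h2⟩ := hY
  have h0 : 0 ≤ ∑ a, ∑ b,
      (Smat (L ⊗ₖ (1 : Matrix (Fin r) (Fin r) ℝ)) Y * dir Y a b * (dir Y a b)ᵀ).trace :=
    Finset.sum_nonneg fun a _ => Finset.sum_nonneg fun b _ => h2 _ (dir_tangent h a b)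
  rw [trace_gram _ h] at h0
  generalize (p : ℝ) - 2 = κ at h0 ⊢
  refine h0.trans_eq ?_
  simp only [Smat, Matrix.sub_apply, sub_mul, Finset.sum_sub_distrib]
  congr 1
  · refine Finset.sum_congr rfl fun i _ => ?_
    rw [Finset.sum_comm]
    refine Finset.sum_congr rfl fun j _ => ?_
    simp only [Matrix.kroneckerMap_apply, Matrix.one_apply, mul_ite, ite_mul, mul_one, mul_zero,
      zero_mul, Finset.sum_ite_eq, Finset.mem_univ, if_true]
    rw [← Finset.mul_sum, Finset.sum_add_distrib, ← Finset.sum_mul]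
    simp [tt]
    ring_nf
    simp
  · rw [Finset.mul_sum]
    refine Finset.sum_congr rfl fun i _ => ?_
    have e : ∀ c j c', SBD ((L ⊗ₖ (1 : Matrix (Fin r) (Fin r) ℝ)) * Y * Yᵀ) (i, c) (j, c') *
        (κ * (if c = c' then 1 else 0)
        + (∑ b, Y (i, c) b * Y (j, c') b) * tt Y i j)
        = if i = j then (if c = c' then ((L ⊗ₖ (1 : Matrix (Fin r) (Fin r) ℝ)) * Y * Yᵀ)
          (i, c) (i, c) * (κ + r) else 0) else 0 := by
      intro c j c'
      by_cases hij : i = j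
      · subst hij
        rw [feas_apply h, tt_self h]
        by_cases hc : c = c'
        · subst hc; simp [SBD]
        · simp [hc]
      · simp [SBD, hij]
    simp only [e]
    have e2 : ∀ c, ((L ⊗ₖ (1 : Matrix (Fin r) (Fin r) ℝ)) * Y * Yᵀ) (i, c) (i, c)
        = ∑ j, L i j * ∑ d, Y (i, c) d * Y (j, c) d := by
      intro c
      rw [Matrix.mul_assoc]
      simp [Matrix.mul_apply, Fintype.sum_prod_type, Matrix.one_apply, mul_comm]
    simp only [Finset.sum_ite_irrel, Finset.sum_const_zero, Finset.sum_ite_eq, Finset.mem_univ,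
      if_true, e2]
    rw [← Finset.sum_mul, mul_comm, Finset.sum_comm]
    simp only [tt, ← Finset.mul_sum]

/-- **Key second-order inequality, noiseless case.**  If the cost matrix is `L̂ = L ⊗ I_r`
(i.e. `Δ = 0` and all `Z_i = I_r`), then every second-order critical point `Y` of the rank-`p`
problem satisfies
`(p − r − 2) Σ_{ij} L_ij tr(Y_i Y_jᵀ) + (1/4) Σ_{ij} A_ij ‖Y_i − Y_j‖_F⁴ ≤ 0`. -/
theorem noiseless_second_order_inequality
    (n r p : ℕ) (hn : 1 ≤ n) (hr : 1 ≤ r) (hrp : r ≤ p)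
    (G : SimpleGraph (Fin n)) [DecidableRel G.Adj]
    (Lhat : Matrix (Fin n × Fin r) (Fin n × Fin r) ℝ)
    (hLhat : Lhat = (G.lapMatrix ℝ) ⊗ₖ (1 : Matrix (Fin r) (Fin r) ℝ))
    (Y : Matrix (Fin n × Fin r) (Fin p) ℝ)
    (hY : IsSecondOrderCritical Lhat Y) :
    ((p : ℝ) - r - 2) *
        (∑ i, ∑ j, G.lapMatrix ℝ i j * (blk Y i * (blk Y j)ᵀ).trace)
      + (1 / 4) *
        (∑ i, ∑ j, G.adjMatrix ℝ i j * (frobSq (blk Y i - blk Y j)) ^ 2) ≤ 0 := by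
  subst hLhat
  have h := hY.1
  have k := key_ineq _ hY
  simp only [tt_eq, frob_eq h]
  rw [lap_sum, lap_sum] at k
  rw [lap_sum]
  simp only [tt_self h] at k ⊢
  rw [← neg_nonneg]
  refine k.trans_eq ?_
  simp only [Finset.mul_sum, ← Finset.sum_add_distrib, ← Finset.sum_sub_distrib,
    ← Finset.sum_neg_distrib]
  refine Finset.sum_congr rfl fun i _ => Finset.sum_congr rfl fun j _ => by ring

end SyncPaper
end
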